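/- arXiv:math/0502056 — 4 statements merged into one kernel-verified Lean document; each statement's English description precedes it below -/
import Mathlib

section
/- For every s, t > 0, the map U_{s,t}(X,Y) = ((t−s)/2)·([X₂,Y₃] + [Y₂,X₃]) + ((t−1)/(2s))·([X₁,Y₃] + [Y₁,X₃]) + ((s−1)/(2t))·([X₁,Y₂] + [Y₁,X₂]) takes values in 𝔪 and is the unique symmetric bilinear map U : 𝔪 × 𝔪 → 𝔪 satisfying 2·g_{s,t}(U(X,Y), Z) = g_{s,t}(X, [Z,Y]_𝔪) + g_{s,t}([Z,X]_𝔪, Y) for all X, Y, Z ∈ 𝔪. (U_{s,t} is the symmetric part of the Nomizu function of the Levi-Civita connection of the invariant metric with characteristic numbers (s,t).) -/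
open Matrix

namespace FlagMfld

variable {n : ℕ}

/-- Membership in `so(n)`: real skew-symmetric `n×n` matrices. -/
def inSO (X : Matrix (Fin n) (Fin n) ℝ) : Prop := Xᵀ = -X

/-- The isotropy subalgebra `𝔥 ≅ so(2) ⊕ so(n-3)`: skew matrices whose only (possibly)
nonzero entries are `H₂₃`, `H₃₂` and `H_{ij}` with `i,j ≥ 4` (1-based indexing; indices are
0-based in the formalization, so the allowed positions are `(1,2)`, `(2,1)` and `i,j ≥ 3`). -/
def inH (X : Matrix (Fin n) (Fin n) ℝ) : Prop :=
  Xᵀ = -X ∧ ∀ i j : Fin n, X i j ≠ 0 →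
    (i.val = 1 ∧ j.val = 2) ∨ (i.val = 2 ∧ j.val = 1) ∨ (3 ≤ i.val ∧ 3 ≤ j.val)

/-- The canonical reductive complement `𝔪`: skew matrices with `S₂₃ = 0` and `S_{ij} = 0`
for all `i,j ≥ 4` (1-based). -/
def inM (X : Matrix (Fin n) (Fin n) ℝ) : Prop :=
  Xᵀ = -X ∧ (∀ i j : Fin n, i.val = 1 → j.val = 2 → X i j = 0) ∧
    ∀ i j : Fin n, 3 ≤ i.val → 3 ≤ j.val → X i j = 0

/-- `𝔪₁`: only `S₁₂`, `S₁₃` (and skew partners) may be nonzero. -/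
def inM1 (X : Matrix (Fin n) (Fin n) ℝ) : Prop :=
  Xᵀ = -X ∧ ∀ i j : Fin n, X i j ≠ 0 →
    (i.val = 0 ∧ (j.val = 1 ∨ j.val = 2)) ∨ (j.val = 0 ∧ (i.val = 1 ∨ i.val = 2))

/-- `𝔪₂`: only `S_{2j}`, `S_{3j}` for `j ≥ 4` (and skew partners) may be nonzero. -/
def inM2 (X : Matrix (Fin n) (Fin n) ℝ) : Prop :=
  Xᵀ = -X ∧ ∀ i j : Fin n, X i j ≠ 0 →
    ((i.val = 1 ∨ i.val = 2) ∧ 3 ≤ j.val) ∨ ((j.val = 1 ∨ j.val = 2) ∧ 3 ≤ i.val)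

/-- `𝔪₃`: only `S_{1j}` for `j ≥ 4` (and skew partners) may be nonzero. -/
def inM3 (X : Matrix (Fin n) (Fin n) ℝ) : Prop :=
  Xᵀ = -X ∧ ∀ i j : Fin n, X i j ≠ 0 →
    (i.val = 0 ∧ 3 ≤ j.val) ∨ (j.val = 0 ∧ 3 ≤ i.val)

/-- Component along `𝔪₁` of the decomposition `𝔪 = 𝔪₁ ⊕ 𝔪₂ ⊕ 𝔪₃` (entrywise). -/
def p1 (X : Matrix (Fin n) (Fin n) ℝ) : Matrix (Fin n) (Fin n) ℝ :=
  Matrix.of fun i j =>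
    if (i.val = 0 ∧ (j.val = 1 ∨ j.val = 2)) ∨ (j.val = 0 ∧ (i.val = 1 ∨ i.val = 2))
    then X i j else 0

/-- Component along `𝔪₂`. -/
def p2 (X : Matrix (Fin n) (Fin n) ℝ) : Matrix (Fin n) (Fin n) ℝ :=
  Matrix.of fun i j =>
    if ((i.val = 1 ∨ i.val = 2) ∧ 3 ≤ j.val) ∨ ((j.val = 1 ∨ j.val = 2) ∧ 3 ≤ i.val)
    then X i j else 0

/-- Component along `𝔪₃`. -/
def p3 (X : Matrix (Fin n) (Fin n) ℝ) : Matrix (Fin n) (Fin n) ℝ :=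
  Matrix.of fun i j =>
    if (i.val = 0 ∧ 3 ≤ j.val) ∨ (j.val = 0 ∧ 3 ≤ i.val) then X i j else 0

/-- Projection of `so(n)` onto `𝔪` along `𝔥` (kills the entries at `𝔥`-positions). -/
def pM (X : Matrix (Fin n) (Fin n) ℝ) : Matrix (Fin n) (Fin n) ℝ :=
  Matrix.of fun i j =>
    if (i.val = 1 ∧ j.val = 2) ∨ (i.val = 2 ∧ j.val = 1) ∨ (3 ≤ i.val ∧ 3 ≤ j.val)
    then 0 else X i j

/-- Matrix commutator `[X,Y] = XY - YX`. -/
def br (X Y : Matrix (Fin n) (Fin n) ℝ) : Matrix (Fin n) (Fin n) ℝ := X * Y - Y * X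

/-- The naturally reductive metric `g₀(X,Y) = (n-1)·Tr(XᵀY)`. -/
noncomputable def g0 (X Y : Matrix (Fin n) (Fin n) ℝ) : ℝ :=
  ((n : ℝ) - 1) * (Xᵀ * Y).trace

/-- The invariant metric with characteristic numbers `(s,t)`:
`g_{s,t}(X,Y) = g₀(X₁,Y₁) + s·g₀(X₂,Y₂) + t·g₀(X₃,Y₃)`. -/
noncomputable def gst (s t : ℝ) (X Y : Matrix (Fin n) (Fin n) ℝ) : ℝ :=
  g0 (p1 X) (p1 Y) + s * g0 (p2 X) (p2 Y) + t * g0 (p3 X) (p3 Y)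

/-- The symmetric part `U_{s,t}` of the Nomizu function of the Levi-Civita connection of
`g_{s,t}`. -/
noncomputable def Ust (s t : ℝ) (X Y : Matrix (Fin n) (Fin n) ℝ) :
    Matrix (Fin n) (Fin n) ℝ :=
  ((t - s) / 2) • (br (p2 X) (p3 Y) + br (p2 Y) (p3 X)) +
  ((t - 1) / (2 * s)) • (br (p1 X) (p3 Y) + br (p1 Y) (p3 X)) +
  ((s - 1) / (2 * t)) • (br (p1 X) (p2 Y) + br (p1 Y) (p2 X))

/-- The block-diagonal matrix `B₄ = diag(1, [[0,1],[-1,0]], -1, …, -1)`. -/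
def B4 : Matrix (Fin n) (Fin n) ℝ :=
  Matrix.of fun i j =>
    if i.val = 0 ∧ j.val = 0 then 1
    else if i.val = 1 ∧ j.val = 2 then 1
    else if i.val = 2 ∧ j.val = 1 then -1
    else if 3 ≤ i.val ∧ i = j then -1
    else 0

/-- `θ = dΦ|𝔪` for the order-4 automorphism: `θ(X) = B₄ X B₄ᵀ`. -/
def th4 (X : Matrix (Fin n) (Fin n) ℝ) : Matrix (Fin n) (Fin n) ℝ := B4 * X * B4ᵀ

/-- The canonical f-structure `f₀ = (1/2)(θ - θ³)` of the 4-symmetric space. -/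
noncomputable def f0 (X : Matrix (Fin n) (Fin n) ℝ) : Matrix (Fin n) (Fin n) ℝ :=
  (1 / 2 : ℝ) • (th4 X - th4 (th4 (th4 X)))

/-- The block-diagonal matrix `B₆ = diag(1, [[1/2,√3/2],[-√3/2,1/2]], -1, …, -1)`. -/
noncomputable def B6 : Matrix (Fin n) (Fin n) ℝ :=
  Matrix.of fun i j =>
    if i.val = 0 ∧ j.val = 0 then 1
    else if i.val = 1 ∧ j.val = 1 then 1 / 2
    else if i.val = 1 ∧ j.val = 2 then Real.sqrt 3 / 2
    else if i.val = 2 ∧ j.val = 1 then -(Real.sqrt 3 / 2)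
    else if i.val = 2 ∧ j.val = 2 then 1 / 2
    else if 3 ≤ i.val ∧ i = j then -1
    else 0

/-- `θ = dΦ|𝔪` for the order-6 automorphism: `θ(X) = B₆ X B₆ᵀ`. -/
noncomputable def th6 (X : Matrix (Fin n) (Fin n) ℝ) : Matrix (Fin n) (Fin n) ℝ :=
  B6 * X * B6ᵀ

/-- `f₁ = (1/√3)(θ - θ⁵)`. -/
noncomputable def f1 (X : Matrix (Fin n) (Fin n) ℝ) : Matrix (Fin n) (Fin n) ℝ :=
  (1 / Real.sqrt 3) • (th6 X - th6 (th6 (th6 (th6 (th6 X)))))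

/-- `f₂ = (1/(2√3))(θ - θ² + θ⁴ - θ⁵)`. -/
noncomputable def f2 (X : Matrix (Fin n) (Fin n) ℝ) : Matrix (Fin n) (Fin n) ℝ :=
  (1 / (2 * Real.sqrt 3)) •
    (th6 X - th6 (th6 X) + th6 (th6 (th6 (th6 X))) - th6 (th6 (th6 (th6 (th6 X)))))

/-- `f₃ = (1/(2√3))(θ + θ² - θ⁴ - θ⁵)`. -/
noncomputable def f3 (X : Matrix (Fin n) (Fin n) ℝ) : Matrix (Fin n) (Fin n) ℝ :=
  (1 / (2 * Real.sqrt 3)) •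
    (th6 X + th6 (th6 X) - th6 (th6 (th6 (th6 X))) - th6 (th6 (th6 (th6 (th6 X)))))

/-- `f₄ = (1/√3)(θ² - θ⁴)`. -/
noncomputable def f4 (X : Matrix (Fin n) (Fin n) ℝ) : Matrix (Fin n) (Fin n) ℝ :=
  (1 / Real.sqrt 3) • (th6 (th6 X) - th6 (th6 (th6 (th6 X))))

/-- The Killing f-structure condition for `f` w.r.t. the metric with characteristic
numbers `(s,t)`: `(1/2)[X, fX]_𝔪 + U_{s,t}(X, fX) - f(U_{s,t}(X,X)) = 0` for all `X ∈ 𝔪`. -/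
def killCond (s t : ℝ) (f : Matrix (Fin n) (Fin n) ℝ → Matrix (Fin n) (Fin n) ℝ) : Prop :=
  ∀ X : Matrix (Fin n) (Fin n) ℝ, inM X →
    (1 / 2 : ℝ) • pM (br X (f X)) + Ust s t X (f X) - f (Ust s t X X) = 0

/-- The nearly Kähler f-structure condition:
`(1/2)[fX, f²X]_𝔪 + U_{s,t}(fX, f²X) - f(U_{s,t}(fX, fX)) = 0` for all `X ∈ 𝔪`. -/
def nkCond (s t : ℝ) (f : Matrix (Fin n) (Fin n) ℝ → Matrix (Fin n) (Fin n) ℝ) : Prop :=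
  ∀ X : Matrix (Fin n) (Fin n) ℝ, inM X →
    (1 / 2 : ℝ) • pM (br (f X) (f (f X))) + Ust s t (f X) (f (f X)) -
      f (Ust s t (f X) (f X)) = 0

/-- The `G₁f` condition:
`f(2·U_{s,t}(fX, f²X) - f(U_{s,t}(fX, fX)) + f(U_{s,t}(f²X, f²X))) = 0` for all `X ∈ 𝔪`. -/
def g1Cond (s t : ℝ) (f : Matrix (Fin n) (Fin n) ℝ → Matrix (Fin n) (Fin n) ℝ) : Prop :=
  ∀ X : Matrix (Fin n) (Fin n) ℝ, inM X →
    f ((2 : ℝ) • Ust s t (f X) (f (f X)) - f (Ust s t (f X) (f X)) +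
      f (Ust s t (f (f X)) (f (f X)))) = 0

end FlagMfld

open FlagMfld

/-!
The brackets obey `[𝔪ₐ, 𝔪ₐ] ⊆ 𝔥` and `[𝔪ₐ, 𝔪_b] ⊆ 𝔪_c` for distinct `a, b, c`, and `g₀` is
`ad`-invariant. Hence both sides of the defining identity are linear combinations of the six values
of the single trilinear form `τ(X, Y, Z) = g₀([X₁, Y₂], Z₃)` at the permutations of `X, Y, Z`, and
comparing coefficients gives the identity. Uniqueness is nondegeneracy of `g_{s,t}` on `𝔪`: pairing
`X` with its own component `Xₐ` gives a nonzero multiple of `g₀(Xₐ, Xₐ)`.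
-/

namespace FlagMfld

theorem apply_swap_of_transpose_eq_neg {ι R : Type*} [Neg R] {A : Matrix ι ι R} (hA : Aᵀ = -A)
    (i j : ι) : A j i = -A i j :=
  congrFun₂ hA i j

theorem exists_ne_zero_of_mul_apply_ne_zero {l m o R : Type*} [Fintype m]
    [NonUnitalNonAssocSemiring R] {A : Matrix l m R} {B : Matrix m o R} {i : l} {j : o}
    (h : (A * B) i j ≠ 0) : ∃ k, A i k ≠ 0 ∧ B k j ≠ 0 := by
  obtain ⟨k, -, hk⟩ := Finset.exists_ne_zero_of_sum_ne_zero h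
  exact ⟨k, left_ne_zero_of_mul hk, right_ne_zero_of_mul hk⟩

section SkewSupported

variable {ι R : Type*} [CommRing R] {S T : ι → ι → Prop} {A B : Matrix ι ι R}

/-- The module of skew-symmetric matrices whose nonzero entries sit at positions satisfying `S`.
The subspaces `𝔥`, `𝔪`, `𝔪₁`, `𝔪₂`, `𝔪₃` are all of this form. -/
def skewSupported (R : Type*) [CommRing R] (S : ι → ι → Prop) : Submodule R (Matrix ι ι R) where
  carrier := {A | Aᵀ = -A ∧ ∀ i j, A i j ≠ 0 → S i j}
  zero_mem' := by simp
  add_mem' {A B} hA hB := by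
    refine ⟨by rw [transpose_add, hA.1, hB.1, neg_add], fun i j hij ↦ ?_⟩
    by_cases hAij : A i j = 0
    · exact hB.2 i j (by simpa [hAij] using hij)
    · exact hA.2 i j hAij
  smul_mem' c A hA :=
    ⟨by rw [transpose_smul, hA.1, smul_neg], fun i j hij ↦ hA.2 i j (right_ne_zero_of_mul hij)⟩

theorem skewSupported_mono (h : ∀ i j, S i j → T i j) :
    skewSupported R S ≤ skewSupported R T :=
  fun _ hA ↦ ⟨hA.1, fun i j hij ↦ h i j (hA.2 i j hij)⟩

/-- The linear projection that replaces by `0` the entries at positions not satisfying `S`. -/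
def restrictEntries (S : ι → ι → Prop) [DecidableRel S] : Matrix ι ι R →ₗ[R] Matrix ι ι R where
  toFun A := of fun i j ↦ if S i j then A i j else 0
  map_add' A B := by ext i j; by_cases h : S i j <;> simp [h]
  map_smul' c A := by ext i j; simp

theorem restrictEntries_apply [DecidableRel S] (A : Matrix ι ι R) (i j : ι) :
    restrictEntries S A i j = if S i j then A i j else 0 :=
  rfl

theorem restrictEntries_mem_skewSupported [DecidableRel S] (hS : ∀ i j, S i j → S j i)
    (hA : Aᵀ = -A) : restrictEntries S A ∈ skewSupported R S := by
  refine ⟨?_, fun i j hij ↦ by_contra fun h ↦ hij (if_neg h)⟩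
  ext i j
  have hij : S j i ↔ S i j := ⟨hS j i, hS i j⟩
  by_cases h : S i j <;>
    simp [restrictEntries_apply, hij, h, apply_swap_of_transpose_eq_neg hA i j]

theorem restrictEntries_eq_self [DecidableRel S] (hA : A ∈ skewSupported R S) :
    restrictEntries S A = A := by
  ext i j
  exact ite_eq_left_iff.2 fun h ↦ (not_imp_comm.1 (hA.2 i j) h).symm

theorem restrictEntries_eq_zero [DecidableRel S] (hA : A ∈ skewSupported R T)
    (h : ∀ i j, T i j → ¬S i j) : restrictEntries S A = 0 := by
  ext i j
  exact ite_eq_right_iff.2 fun hS ↦ not_imp_comm.1 (hA.2 i j) fun hT ↦ h i j hT hS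

theorem restrictEntries_restrictEntries [DecidableRel S] [DecidableRel T]
    (h : ∀ i j, S i j → T i j) (A : Matrix ι ι R) :
    restrictEntries S (restrictEntries T A) = restrictEntries S A := by
  ext i j
  by_cases hS : S i j <;> simp [restrictEntries_apply, hS, h i j]

variable [Fintype ι]

theorem lie_apply_of_transpose_eq_neg (hA : Aᵀ = -A) (hB : Bᵀ = -B) (i j : ι) :
    ⁅A, B⁆ i j = (A * B) i j - (A * B) j i := by
  have hBA : B * A = (A * B)ᵀ := by rw [transpose_mul, hA, hB, neg_mul_neg]
  rw [Ring.lie_def, hBA, Matrix.sub_apply, transpose_apply]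

/-- Only off-diagonal positions need checking, since a bracket of skew matrices vanishes on the
diagonal. -/
theorem lie_mem_skewSupported {P : ι → ι → Prop} (hA : A ∈ skewSupported R S)
    (hB : B ∈ skewSupported R T) (hP : ∀ i j, P i j → P j i)
    (h : ∀ i j k, i ≠ j → S i k → T k j → P i j) : ⁅A, B⁆ ∈ skewSupported R P := by
  have hlie := lie_apply_of_transpose_eq_neg hA.1 hB.1
  have hmul : ∀ i j, i ≠ j → (A * B) i j ≠ 0 → P i j := fun i j hne hij ↦
    let ⟨k, hAk, hBk⟩ := exists_ne_zero_of_mul_apply_ne_zero hij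
    h i j k hne (hA.2 i k hAk) (hB.2 k j hBk)
  refine ⟨by ext i j; simp [hlie], fun i j hij ↦ ?_⟩
  have hne : i ≠ j := by
    rintro rfl
    exact hij (by rw [hlie, sub_self])
  by_cases hAB : (A * B) i j = 0
  · exact hP j i (hmul j i hne.symm fun hAB' ↦ hij (by rw [hlie, hAB, hAB', sub_self]))
  · exact hmul i j hne hAB

end SkewSupported

variable {n : ℕ} {A B C X Y Z : Matrix (Fin n) (Fin n) ℝ} {s t : ℝ}

/-- The positions at which elements of `𝔥` may be nonzero (0-based indices). -/
abbrev EntryH (i j : Fin n) : Prop :=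
  (i.val = 1 ∧ j.val = 2) ∨ (i.val = 2 ∧ j.val = 1) ∨ (3 ≤ i.val ∧ 3 ≤ j.val)

/-- The positions at which elements of `𝔪₁` may be nonzero (0-based indices). -/
abbrev EntryM1 (i j : Fin n) : Prop :=
  (i.val = 0 ∧ (j.val = 1 ∨ j.val = 2)) ∨ (j.val = 0 ∧ (i.val = 1 ∨ i.val = 2))

/-- The positions at which elements of `𝔪₂` may be nonzero (0-based indices). -/
abbrev EntryM2 (i j : Fin n) : Prop :=
  ((i.val = 1 ∨ i.val = 2) ∧ 3 ≤ j.val) ∨ ((j.val = 1 ∨ j.val = 2) ∧ 3 ≤ i.val)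

/-- The positions at which elements of `𝔪₃` may be nonzero (0-based indices). -/
abbrev EntryM3 (i j : Fin n) : Prop :=
  (i.val = 0 ∧ 3 ≤ j.val) ∨ (j.val = 0 ∧ 3 ≤ i.val)

/-- The positions at which elements of `𝔪` may be nonzero. -/
abbrev EntryM (i j : Fin n) : Prop := EntryM1 i j ∨ EntryM2 i j ∨ EntryM3 i j

theorem inM_iff_mem_skewSupported : inM A ↔ A ∈ skewSupported ℝ EntryM := by
  refine and_congr_right fun hA ↦ ⟨fun ⟨h12, h33⟩ i j hij ↦ ?_, fun h ↦ ⟨?_, ?_⟩⟩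
  · have hji : A j i ≠ 0 := by rwa [apply_swap_of_transpose_eq_neg hA, neg_ne_zero]
    have hne : i.val ≠ j.val := fun h ↦ by
      obtain rfl := Fin.ext h
      exact hij (self_eq_neg.1 (apply_swap_of_transpose_eq_neg hA i i))
    have := mt (h12 i j)
    have := mt (h12 j i)
    have := mt (h33 i j)
    grind
  all_goals
    intro i j hi hj
    by_contra hij
    have := h i j hij
    omega

theorem p1_mem (hA : inSO A) : inM1 (p1 A) :=
  restrictEntries_mem_skewSupported (S := EntryM1) (fun i j ↦ by omega) hA

theorem p2_mem (hA : inSO A) : inM2 (p2 A) :=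
  restrictEntries_mem_skewSupported (S := EntryM2) (fun i j ↦ by omega) hA

theorem p3_mem (hA : inSO A) : inM3 (p3 A) :=
  restrictEntries_mem_skewSupported (S := EntryM3) (fun i j ↦ by omega) hA

theorem inM_of_inM1 (hA : inM1 A) : inM A :=
  inM_iff_mem_skewSupported.2 (skewSupported_mono (fun _ _ ↦ .inl) hA)

theorem inM_of_inM2 (hA : inM2 A) : inM A :=
  inM_iff_mem_skewSupported.2 (skewSupported_mono (fun _ _ ↦ .inr ∘ .inl) hA)

theorem inM_of_inM3 (hA : inM3 A) : inM A :=
  inM_iff_mem_skewSupported.2 (skewSupported_mono (fun _ _ ↦ .inr ∘ .inr) hA)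

theorem inM_add (hA : inM A) (hB : inM B) : inM (A + B) := by
  rw [inM_iff_mem_skewSupported] at *
  exact add_mem hA hB

theorem inM_sub (hA : inM A) (hB : inM B) : inM (A - B) := by
  rw [inM_iff_mem_skewSupported] at *
  exact sub_mem hA hB

theorem p1_add_p2_add_p3 (hA : inM A) : p1 A + p2 A + p3 A = A := by
  ext i j
  by_cases hij : A i j = 0
  · simp [p1, p2, p3, hij]
  · have := (inM_iff_mem_skewSupported.1 hA).2 i j hij
    simp only [p1, p2, p3, Matrix.add_apply, of_apply]
    split_ifs <;> first | omega | simp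

theorem br_inM1_inM1 (hA : inM1 A) (hB : inM1 B) : inH (br A B) :=
  lie_mem_skewSupported (P := EntryH) hA hB (fun i j ↦ by omega) fun i j k ↦ by omega

theorem br_inM2_inM2 (hA : inM2 A) (hB : inM2 B) : inH (br A B) :=
  lie_mem_skewSupported (P := EntryH) hA hB (fun i j ↦ by omega) fun i j k ↦ by omega

theorem br_inM3_inM3 (hA : inM3 A) (hB : inM3 B) : inH (br A B) :=
  lie_mem_skewSupported (P := EntryH) hA hB (fun i j ↦ by omega) fun i j k ↦ by omega

theorem br_inM2_inM3 (hA : inM2 A) (hB : inM3 B) : inM1 (br A B) :=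
  lie_mem_skewSupported (P := EntryM1) hA hB (fun i j ↦ by omega) fun i j k ↦ by omega

theorem br_inM1_inM3 (hA : inM1 A) (hB : inM3 B) : inM2 (br A B) :=
  lie_mem_skewSupported (P := EntryM2) hA hB (fun i j ↦ by omega) fun i j k ↦ by omega

theorem br_inM1_inM2 (hA : inM1 A) (hB : inM2 B) : inM3 (br A B) :=
  lie_mem_skewSupported (P := EntryM3) hA hB (fun i j ↦ by omega) fun i j k ↦ by omega

theorem exists_inH_br_eq (hX : inM X) (hY : inM Y) :
    ∃ H, inH H ∧ br X Y = H + ((br (p2 X) (p3 Y) - br (p2 Y) (p3 X)) +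
      (br (p1 X) (p3 Y) - br (p1 Y) (p3 X)) + (br (p1 X) (p2 Y) - br (p1 Y) (p2 X))) := by
  refine ⟨br (p1 X) (p1 Y) + br (p2 X) (p2 Y) + br (p3 X) (p3 Y), ?_, ?_⟩
  · exact (skewSupported ℝ EntryH).add_mem ((skewSupported ℝ EntryH).add_mem
      (br_inM1_inM1 (p1_mem hX.1) (p1_mem hY.1)) (br_inM2_inM2 (p2_mem hX.1) (p2_mem hY.1)))
      (br_inM3_inM3 (p3_mem hX.1) (p3_mem hY.1))
  · conv_lhs => rw [← p1_add_p2_add_p3 hX, ← p1_add_p2_add_p3 hY]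
    simp only [br]
    noncomm_ring

theorem g0_comm (A B : Matrix (Fin n) (Fin n) ℝ) : g0 A B = g0 B A := by
  rw [g0, g0, ← trace_transpose, transpose_mul, transpose_transpose]

theorem g0_add_left (A B C : Matrix (Fin n) (Fin n) ℝ) : g0 (A + B) C = g0 A C + g0 B C := by
  simp only [g0, transpose_add, Matrix.add_mul, trace_add, mul_add]

theorem g0_sub_left (A B C : Matrix (Fin n) (Fin n) ℝ) : g0 (A - B) C = g0 A C - g0 B C := by
  simp only [g0, transpose_sub, Matrix.sub_mul, trace_sub, mul_sub]

theorem g0_smul_left (c : ℝ) (A B : Matrix (Fin n) (Fin n) ℝ) : g0 (c • A) B = c * g0 A B := by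
  simp only [g0, transpose_smul, Matrix.smul_mul, trace_smul, smul_eq_mul, mul_left_comm]

theorem g0_zero_left (A : Matrix (Fin n) (Fin n) ℝ) : g0 0 A = 0 := by
  simp only [g0, transpose_zero, Matrix.zero_mul, trace_zero, mul_zero]

theorem eq_zero_of_g0_self_eq_zero (hA : inSO A) (h : g0 A A = 0) : A = 0 := by
  rcases mul_eq_zero.1 h with hn | htr
  · obtain rfl : n = 1 := by exact_mod_cast sub_eq_zero.1 hn
    ext i j
    rw [Subsingleton.elim j i]
    exact self_eq_neg.1 (apply_swap_of_transpose_eq_neg hA i i)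
  · rwa [← conjTranspose_eq_transpose_of_trivial, trace_conjTranspose_mul_self_eq_zero_iff] at htr

theorem g0_br_left_rotate (hA : inSO A) (hB : inSO B) (hC : inSO C) :
    g0 (br A B) C = g0 (br B C) A := by
  simp only [inSO] at hA hB hC
  simp only [g0, br, transpose_sub, transpose_mul, hA, hB, hC, neg_mul_neg, Matrix.sub_mul,
    trace_sub]
  rw [trace_mul_cycle B A C, trace_mul_cycle A B C, trace_mul_cycle C A B]

theorem g0_br_left_swap (hA : inSO A) (hB : inSO B) (hC : inSO C) :
    g0 (br A B) C = -g0 (br A C) B := by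
  have hneg : br A B = (-1 : ℝ) • br B A := by simp [br]
  rw [hneg, g0_smul_left, neg_one_mul, g0_br_left_rotate hB hA hC]

/-- The trilinear form `τ(X, Y, Z) = g₀([X₁, Y₂], Z₃)`, in terms of which both sides of the
identity defining `U_{s,t}` are expressed. -/
noncomputable def tripleForm (X Y Z : Matrix (Fin n) (Fin n) ℝ) : ℝ :=
  g0 (br (p1 X) (p2 Y)) (p3 Z)

theorem g0_br_p2_p3_p1 (hX : inSO X) (hY : inSO Y) (hZ : inSO Z) :
    g0 (br (p2 X) (p3 Y)) (p1 Z) = tripleForm Z X Y :=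
  (g0_br_left_rotate (p1_mem hZ).1 (p2_mem hX).1 (p3_mem hY).1).symm

theorem g0_br_p1_p3_p2 (hX : inSO X) (hY : inSO Y) (hZ : inSO Z) :
    g0 (br (p1 X) (p3 Y)) (p2 Z) = -tripleForm X Z Y :=
  g0_br_left_swap (p1_mem hX).1 (p3_mem hY).1 (p2_mem hZ).1

theorem g0_br_p1_p2_p3 (X Y Z : Matrix (Fin n) (Fin n) ℝ) :
    g0 (br (p1 X) (p2 Y)) (p3 Z) = tripleForm X Y Z :=
  rfl

theorem gst_comm (s t : ℝ) (X Y : Matrix (Fin n) (Fin n) ℝ) : gst s t X Y = gst s t Y X := by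
  simp only [gst, g0_comm (p1 X), g0_comm (p2 X), g0_comm (p3 X)]

theorem gst_add_left (s t : ℝ) (A B C : Matrix (Fin n) (Fin n) ℝ) :
    gst s t (A + B) C = gst s t A C + gst s t B C := by
  have h1 : p1 (A + B) = p1 A + p1 B := map_add (restrictEntries EntryM1) A B
  have h2 : p2 (A + B) = p2 A + p2 B := map_add (restrictEntries EntryM2) A B
  have h3 : p3 (A + B) = p3 A + p3 B := map_add (restrictEntries EntryM3) A B
  simp only [gst, h1, h2, h3, g0_add_left]
  ring

theorem gst_sub_left (s t : ℝ) (A B C : Matrix (Fin n) (Fin n) ℝ) :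
    gst s t (A - B) C = gst s t A C - gst s t B C := by
  rw [eq_sub_iff_add_eq, ← gst_add_left, sub_add_cancel]

theorem pM_eq_restrictEntries (A : Matrix (Fin n) (Fin n) ℝ) :
    pM A = restrictEntries (fun i j ↦ ¬EntryH i j) A := by
  ext i j
  exact (ite_not ..).symm

theorem gst_pM_left (s t : ℝ) (A B : Matrix (Fin n) (Fin n) ℝ) :
    gst s t (pM A) B = gst s t A B := by
  rw [pM_eq_restrictEntries]
  set A' := restrictEntries (fun i j ↦ ¬EntryH i j) A
  have h1 : p1 A' = p1 A := restrictEntries_restrictEntries (S := EntryM1) (fun i j ↦ by omega) A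
  have h2 : p2 A' = p2 A := restrictEntries_restrictEntries (S := EntryM2) (fun i j ↦ by omega) A
  have h3 : p3 A' = p3 A := restrictEntries_restrictEntries (S := EntryM3) (fun i j ↦ by omega) A
  simp only [gst, h1, h2, h3]

theorem gst_left_of_inH (hA : inH A) (Z : Matrix (Fin n) (Fin n) ℝ) : gst s t A Z = 0 := by
  have h1 : p1 A = 0 := restrictEntries_eq_zero (S := EntryM1) hA fun i j ↦ by omega
  have h2 : p2 A = 0 := restrictEntries_eq_zero (S := EntryM2) hA fun i j ↦ by omega
  have h3 : p3 A = 0 := restrictEntries_eq_zero (S := EntryM3) hA fun i j ↦ by omega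
  simp only [gst, h1, h2, h3, g0_zero_left, mul_zero, add_zero]

theorem gst_left_of_inM1 (hA : inM1 A) (Z : Matrix (Fin n) (Fin n) ℝ) :
    gst s t A Z = g0 A (p1 Z) := by
  have h1 : p1 A = A := restrictEntries_eq_self (S := EntryM1) hA
  have h2 : p2 A = 0 := restrictEntries_eq_zero (S := EntryM2) hA fun i j ↦ by omega
  have h3 : p3 A = 0 := restrictEntries_eq_zero (S := EntryM3) hA fun i j ↦ by omega
  simp only [gst, h1, h2, h3, g0_zero_left, mul_zero, add_zero]

theorem gst_left_of_inM2 (hA : inM2 A) (Z : Matrix (Fin n) (Fin n) ℝ) :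
    gst s t A Z = s * g0 A (p2 Z) := by
  have h1 : p1 A = 0 := restrictEntries_eq_zero (S := EntryM1) hA fun i j ↦ by omega
  have h2 : p2 A = A := restrictEntries_eq_self (S := EntryM2) hA
  have h3 : p3 A = 0 := restrictEntries_eq_zero (S := EntryM3) hA fun i j ↦ by omega
  simp only [gst, h1, h2, h3, g0_zero_left, mul_zero, zero_add, add_zero]

theorem gst_left_of_inM3 (hA : inM3 A) (Z : Matrix (Fin n) (Fin n) ℝ) :
    gst s t A Z = t * g0 A (p3 Z) := by
  have h1 : p1 A = 0 := restrictEntries_eq_zero (S := EntryM1) hA fun i j ↦ by omega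
  have h2 : p2 A = 0 := restrictEntries_eq_zero (S := EntryM2) hA fun i j ↦ by omega
  have h3 : p3 A = A := restrictEntries_eq_self (S := EntryM3) hA
  simp only [gst, h1, h2, h3, g0_zero_left, mul_zero, zero_add]

theorem gst_add_add_left (hA : inM1 A) (hB : inM2 B) (hC : inM3 C)
    (Z : Matrix (Fin n) (Fin n) ℝ) :
    gst s t (A + B + C) Z = g0 A (p1 Z) + s * g0 B (p2 Z) + t * g0 C (p3 Z) := by
  rw [gst_add_left, gst_add_left, gst_left_of_inM1 hA, gst_left_of_inM2 hB, gst_left_of_inM3 hC]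

theorem eq_zero_of_forall_gst_eq_zero (hs : s ≠ 0) (ht : t ≠ 0) (hX : inM X)
    (h : ∀ Z, inM Z → gst s t X Z = 0) : X = 0 := by
  have hX1 := p1_mem hX.1
  have hX2 := p2_mem hX.1
  have hX3 := p3_mem hX.1
  have h1 : g0 (p1 X) (p1 X) = 0 := by
    rw [← gst_left_of_inM1 (s := s) (t := t) hX1, gst_comm, h _ (inM_of_inM1 hX1)]
  have h2 : s * g0 (p2 X) (p2 X) = 0 := by
    rw [← gst_left_of_inM2 (t := t) hX2, gst_comm, h _ (inM_of_inM2 hX2)]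
  have h3 : t * g0 (p3 X) (p3 X) = 0 := by
    rw [← gst_left_of_inM3 (s := s) hX3, gst_comm, h _ (inM_of_inM3 hX3)]
  rw [← p1_add_p2_add_p3 hX, eq_zero_of_g0_self_eq_zero hX1.1 h1,
    eq_zero_of_g0_self_eq_zero hX2.1 ((mul_eq_zero_iff_left hs).1 h2),
    eq_zero_of_g0_self_eq_zero hX3.1 ((mul_eq_zero_iff_left ht).1 h3), add_zero, add_zero]

theorem gst_pM_br_left (hX : inM X) (hY : inM Y) (hZ : inM Z) (s t : ℝ) :
    gst s t (pM (br X Y)) Z = (tripleForm Z X Y - tripleForm Z Y X) -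
      s * (tripleForm X Z Y - tripleForm Y Z X) + t * (tripleForm X Y Z - tripleForm Y X Z) := by
  obtain ⟨H, hH, hbr⟩ := exists_inH_br_eq hX hY
  have h1 : inM1 (br (p2 X) (p3 Y) - br (p2 Y) (p3 X)) := (skewSupported ℝ EntryM1).sub_mem
    (br_inM2_inM3 (p2_mem hX.1) (p3_mem hY.1)) (br_inM2_inM3 (p2_mem hY.1) (p3_mem hX.1))
  have h2 : inM2 (br (p1 X) (p3 Y) - br (p1 Y) (p3 X)) := (skewSupported ℝ EntryM2).sub_mem
    (br_inM1_inM3 (p1_mem hX.1) (p3_mem hY.1)) (br_inM1_inM3 (p1_mem hY.1) (p3_mem hX.1))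
  have h3 : inM3 (br (p1 X) (p2 Y) - br (p1 Y) (p2 X)) := (skewSupported ℝ EntryM3).sub_mem
    (br_inM1_inM2 (p1_mem hX.1) (p2_mem hY.1)) (br_inM1_inM2 (p1_mem hY.1) (p2_mem hX.1))
  rw [gst_pM_left, hbr, gst_add_left, gst_left_of_inH hH, gst_add_add_left h1 h2 h3]
  simp only [g0_sub_left, g0_br_p2_p3_p1 hX.1 hY.1 hZ.1, g0_br_p2_p3_p1 hY.1 hX.1 hZ.1,
    g0_br_p1_p3_p2 hX.1 hY.1 hZ.1, g0_br_p1_p3_p2 hY.1 hX.1 hZ.1, g0_br_p1_p2_p3]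
  ring

theorem smul_br_add_br_inM1 (hX : inSO X) (hY : inSO Y) (c : ℝ) :
    inM1 (c • (br (p2 X) (p3 Y) + br (p2 Y) (p3 X))) :=
  (skewSupported ℝ EntryM1).smul_mem c <| (skewSupported ℝ EntryM1).add_mem
    (br_inM2_inM3 (p2_mem hX) (p3_mem hY)) (br_inM2_inM3 (p2_mem hY) (p3_mem hX))

theorem smul_br_add_br_inM2 (hX : inSO X) (hY : inSO Y) (c : ℝ) :
    inM2 (c • (br (p1 X) (p3 Y) + br (p1 Y) (p3 X))) :=
  (skewSupported ℝ EntryM2).smul_mem c <| (skewSupported ℝ EntryM2).add_mem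
    (br_inM1_inM3 (p1_mem hX) (p3_mem hY)) (br_inM1_inM3 (p1_mem hY) (p3_mem hX))

theorem smul_br_add_br_inM3 (hX : inSO X) (hY : inSO Y) (c : ℝ) :
    inM3 (c • (br (p1 X) (p2 Y) + br (p1 Y) (p2 X))) :=
  (skewSupported ℝ EntryM3).smul_mem c <| (skewSupported ℝ EntryM3).add_mem
    (br_inM1_inM2 (p1_mem hX) (p2_mem hY)) (br_inM1_inM2 (p1_mem hY) (p2_mem hX))

theorem Ust_inM (hX : inSO X) (hY : inSO Y) (s t : ℝ) : inM (Ust s t X Y) :=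
  inM_add (inM_add (inM_of_inM1 (smul_br_add_br_inM1 hX hY _))
    (inM_of_inM2 (smul_br_add_br_inM2 hX hY _))) (inM_of_inM3 (smul_br_add_br_inM3 hX hY _))

theorem Ust_comm (s t : ℝ) (X Y : Matrix (Fin n) (Fin n) ℝ) : Ust s t X Y = Ust s t Y X := by
  simp only [Ust, add_comm]

theorem two_mul_gst_Ust_left (hs : s ≠ 0) (ht : t ≠ 0) (hX : inSO X) (hY : inSO Y)
    (hZ : inSO Z) :
    2 * gst s t (Ust s t X Y) Z = (t - s) * (tripleForm Z X Y + tripleForm Z Y X) -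
      (t - 1) * (tripleForm X Z Y + tripleForm Y Z X) +
      (s - 1) * (tripleForm X Y Z + tripleForm Y X Z) := by
  rw [Ust, gst_add_add_left (smul_br_add_br_inM1 hX hY _) (smul_br_add_br_inM2 hX hY _)
    (smul_br_add_br_inM3 hX hY _)]
  simp only [g0_smul_left, g0_add_left, g0_br_p2_p3_p1 hX hY hZ, g0_br_p2_p3_p1 hY hX hZ,
    g0_br_p1_p3_p2 hX hY hZ, g0_br_p1_p3_p2 hY hX hZ, g0_br_p1_p2_p3]
  field_simp
  ring

theorem two_mul_gst_Ust_eq_gst_pM_br (hs : s ≠ 0) (ht : t ≠ 0) (hX : inM X) (hY : inM Y)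
    (hZ : inM Z) :
    2 * gst s t (Ust s t X Y) Z = gst s t X (pM (br Z Y)) + gst s t (pM (br Z X)) Y := by
  rw [gst_comm s t X, gst_pM_br_left hZ hY hX, gst_pM_br_left hZ hX hY,
    two_mul_gst_Ust_left hs ht hX.1 hY.1 hZ.1]
  ring

end FlagMfld

theorem statement12_general (n : ℕ) {s t : ℝ} (hs : s ≠ 0) (ht : t ≠ 0) :
    (∀ X Y : Matrix (Fin n) (Fin n) ℝ, inM X → inM Y → inM (Ust s t X Y)) ∧
    (∀ X Y : Matrix (Fin n) (Fin n) ℝ, Ust s t X Y = Ust s t Y X) ∧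
    (∀ X Y Z : Matrix (Fin n) (Fin n) ℝ, inM X → inM Y → inM Z →
      2 * gst s t (Ust s t X Y) Z =
        gst s t X (pM (br Z Y)) + gst s t (pM (br Z X)) Y) ∧
    (∀ X Y W : Matrix (Fin n) (Fin n) ℝ, inM X → inM Y → inM W →
      (∀ Z : Matrix (Fin n) (Fin n) ℝ, inM Z →
        2 * gst s t W Z = gst s t X (pM (br Z Y)) + gst s t (pM (br Z X)) Y) →
      W = Ust s t X Y) := by
  refine ⟨fun X Y hX hY ↦ Ust_inM hX.1 hY.1 s t, Ust_comm s t,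
    fun X Y Z ↦ two_mul_gst_Ust_eq_gst_pM_br hs ht, fun X Y W hX hY hW hid ↦ ?_⟩
  refine sub_eq_zero.1 <| eq_zero_of_forall_gst_eq_zero hs ht
    (inM_sub hW (Ust_inM hX.1 hY.1 s t)) fun Z hZ ↦ ?_
  have hU := two_mul_gst_Ust_eq_gst_pM_br hs ht hX hY hZ
  have hWZ := hid Z hZ
  rw [gst_sub_left]
  linarith

/-- For `s,t > 0`, `U_{s,t}` takes values in `𝔪` and is the unique
symmetric bilinear map `U : 𝔪 × 𝔪 → 𝔪` with
`2·g_{s,t}(U(X,Y),Z) = g_{s,t}(X,[Z,Y]_𝔪) + g_{s,t}([Z,X]_𝔪,Y)` for all `X,Y,Z ∈ 𝔪`. -/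
theorem statement12 (n : ℕ) (hn : 4 ≤ n) (s t : ℝ) (hs : 0 < s) (ht : 0 < t) :
    -- U_{s,t} takes values in 𝔪
    (∀ X Y : Matrix (Fin n) (Fin n) ℝ, inM X → inM Y → inM (Ust s t X Y)) ∧
    -- U_{s,t} is symmetric
    (∀ X Y : Matrix (Fin n) (Fin n) ℝ, inM X → inM Y → Ust s t X Y = Ust s t Y X) ∧
    -- defining identity
    (∀ X Y Z : Matrix (Fin n) (Fin n) ℝ, inM X → inM Y → inM Z →
      2 * gst s t (Ust s t X Y) Z =
        gst s t X (pM (br Z Y)) + gst s t (pM (br Z X)) Y) ∧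
    -- uniqueness among symmetric bilinear maps 𝔪 × 𝔪 → 𝔪 satisfying the identity
    (∀ U' : Matrix (Fin n) (Fin n) ℝ → Matrix (Fin n) (Fin n) ℝ → Matrix (Fin n) (Fin n) ℝ,
      (∀ X Y : Matrix (Fin n) (Fin n) ℝ, inM X → inM Y → inM (U' X Y)) →
      (∀ X Y : Matrix (Fin n) (Fin n) ℝ, inM X → inM Y → U' X Y = U' Y X) →
      (∀ (c : ℝ) (X Y : Matrix (Fin n) (Fin n) ℝ), inM X → inM Y →
        U' (c • X) Y = c • U' X Y) →
      (∀ X X' Y : Matrix (Fin n) (Fin n) ℝ, inM X → inM X' → inM Y →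
        U' (X + X') Y = U' X Y + U' X' Y) →
      (∀ X Y Z : Matrix (Fin n) (Fin n) ℝ, inM X → inM Y → inM Z →
        2 * gst s t (U' X Y) Z =
          gst s t X (pM (br Z Y)) + gst s t (pM (br Z X)) Y) →
      ∀ X Y : Matrix (Fin n) (Fin n) ℝ, inM X → inM Y → U' X Y = Ust s t X Y) := by
  obtain ⟨hM, hcomm, hid, huniq⟩ := statement12_general n hs.ne' ht.ne'
  exact ⟨hM, fun X Y _ _ ↦ hcomm X Y, hid, fun U' hU' _ _ _ hid' X Y hX hY ↦
    huniq X Y (U' X Y) hX hY (hU' X Y hX hY) fun Z hZ ↦ hid' X Y Z hX hY hZ⟩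
end

section
/- Consider SO(n)/SO(2)×SO(n−3) as a 4-symmetric space with its unique canonical f-structure f₀. For s, t > 0, f₀ satisfies the NKf condition for (s,t) — that is, (1/2)[f₀X, f₀²X]_𝔪 + U_{s,t}(f₀X, f₀²X) − f₀(U_{s,t}(f₀X, f₀X)) = 0 for all X ∈ 𝔪 — if and only if s = 1 (with t > 0 arbitrary). In other words, f₀ is a nearly Kähler f-structure exactly for the invariant Riemannian metrics with characteristic numbers (1, t), t > 0. -/
open Matrix

open FlagMfld

/-!
Conjugation by `B₄` is an algebra automorphism `θ` with `θ⁴ = 1`, and `θ²` splits the matrices into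
an even part (`θ² = 1`) containing `𝔥` and `𝔪₃`, and an odd part (`θ² = -1`) containing `𝔪₁` and
`𝔪₂`. The f-structure `f₀` takes values in the odd part, where it coincides with `θ`, and kills the
even part.

For odd `Z = f₀ X` we have `θ[Z, θZ] = [θZ, -Z] = [Z, θZ]`, and the fixed points of `θ` in `so(n)`
lie in `𝔥`, so the first term of the NKf condition vanishes. The third term vanishes because
`U_{s,t}(Z, Z)` is even. What remains is `U_{s,t}(Z, θZ) = 0` for all odd `Z`. Since `Z₃ = 0`, the
left side carries the factor `(s - 1) / t`; its entries at `(1, k)` with `k ≥ 4` are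
`(s - 1) / t * (Z₁₃ Z₂ₖ - Z₁₂ Z₃ₖ)`, and these do not vanish for all odd `Z` unless `s = 1`.
-/

namespace FlagMfld

section Brackets

variable {n : ℕ} {X Y : Matrix (Fin n) (Fin n) ℝ}

theorem inSO.apply_eq_neg (hX : inSO X) (i j : Fin n) : X i j = -X j i :=
  congrFun (congrFun hX j) i

theorem inSO.add (hX : inSO X) (hY : inSO Y) : inSO (X + Y) := by
  unfold inSO at hX hY ⊢
  rw [transpose_add, hX, hY, neg_add]

theorem inSO.br (hX : inSO X) (hY : inSO Y) : inSO (br X Y) := by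
  unfold inSO at hX hY ⊢
  simp only [FlagMfld.br, transpose_sub, transpose_mul, hX, hY]
  noncomm_ring

theorem pM_eq_zero_of_inH (hX : inH X) : pM X = 0 := by
  ext i j
  simp only [pM, of_apply, Matrix.zero_apply, ite_eq_left_iff]
  exact fun hij => of_not_not fun hne => hij (hX.2 i j hne)

end Brackets

section Linear

variable {n : ℕ} {X Y : Matrix (Fin n) (Fin n) ℝ}

theorem th4_neg (X : Matrix (Fin n) (Fin n) ℝ) : th4 (-X) = -th4 X := by
  simp only [th4, Matrix.mul_neg, Matrix.neg_mul]

theorem th4_add (X Y : Matrix (Fin n) (Fin n) ℝ) : th4 (X + Y) = th4 X + th4 Y := by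
  simp only [th4, Matrix.mul_add, Matrix.add_mul]

theorem th4_sub (X Y : Matrix (Fin n) (Fin n) ℝ) : th4 (X - Y) = th4 X - th4 Y := by
  simp only [th4, Matrix.mul_sub, Matrix.sub_mul]

theorem th4_smul (c : ℝ) (X : Matrix (Fin n) (Fin n) ℝ) : th4 (c • X) = c • th4 X := by
  simp only [th4, Matrix.mul_smul, Matrix.smul_mul]

theorem inSO.th4 (hX : inSO X) : inSO (th4 X) := by
  unfold inSO at hX ⊢
  simp only [FlagMfld.th4, transpose_mul, transpose_transpose, hX, Matrix.neg_mul,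
    Matrix.mul_neg, Matrix.mul_assoc]

theorem inSO.f0 (hX : inSO X) : inSO (f0 X) := by
  have h₁ : (FlagMfld.th4 X)ᵀ = _ := hX.th4
  have h₃ : (FlagMfld.th4 (FlagMfld.th4 (FlagMfld.th4 X)))ᵀ = _ := hX.th4.th4.th4
  unfold inSO
  rw [FlagMfld.f0, transpose_smul, transpose_sub, h₁, h₃, neg_sub_neg, ← smul_neg, neg_sub]

/-- The even part of the `ℤ/2`-grading defined by the involution `θ²`; it contains `𝔥` and `𝔪₃`. -/
def IsEven (X : Matrix (Fin n) (Fin n) ℝ) : Prop := th4 (th4 X) = X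

/-- The odd part of the `ℤ/2`-grading defined by the involution `θ²`; it contains `𝔪₁` and `𝔪₂`. -/
def IsOdd (X : Matrix (Fin n) (Fin n) ℝ) : Prop := th4 (th4 X) = -X

theorem IsEven.add (hX : IsEven X) (hY : IsEven Y) : IsEven (X + Y) := by
  unfold IsEven at *
  rw [th4_add, th4_add, hX, hY]

theorem IsEven.smul (hX : IsEven X) (c : ℝ) : IsEven (c • X) := by
  unfold IsEven at *
  rw [th4_smul, th4_smul, hX]

theorem IsOdd.add (hX : IsOdd X) (hY : IsOdd Y) : IsOdd (X + Y) := by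
  unfold IsOdd at *
  rw [th4_add, th4_add, hX, hY, neg_add]

theorem IsOdd.neg (hX : IsOdd X) : IsOdd (-X) := by
  unfold IsOdd at *
  rw [th4_neg, th4_neg, hX]

theorem IsOdd.th4 (hX : IsOdd X) : IsOdd (th4 X) := by
  unfold IsOdd at *
  rw [hX, th4_neg]

theorem IsEven.f0_eq_zero (hX : IsEven X) : f0 X = 0 := by
  unfold IsEven at hX
  rw [f0, hX, sub_self, smul_zero]

theorem IsOdd.f0_eq_th4 (hX : IsOdd X) : f0 X = FlagMfld.th4 X := by
  unfold IsOdd at hX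
  rw [f0, hX, th4_neg]
  module

end Linear

section SignedPermutation

variable {m : ℕ}

/-- The nonzero entries of `B₄`, read as a signed permutation matrix: row `i` has the entry
`rowSign i` in the column `Equiv.swap 1 2 i`. -/
def rowSign (i : Fin m) : ℝ := if i.val ≤ 1 then 1 else -1

/-- The diagonal of `B₄²`; the position `(i, j)` is even or odd for the grading by `θ²` according to
the sign `parity i * parity j`. -/
def parity (i : Fin m) : ℝ := if i.val = 1 ∨ i.val = 2 then -1 else 1

theorem B4_apply (i j : Fin (m + 3)) :
    (B4 : Matrix (Fin (m + 3)) (Fin (m + 3)) ℝ) i j =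
      if Equiv.swap 1 2 i = j then rowSign i else 0 := by
  simp only [B4, rowSign, of_apply, Equiv.swap_apply_def, Fin.ext_iff, apply_ite Fin.val,
    Fin.val_one, Fin.val_two]
  split_ifs <;> first | rfl | omega

theorem rowSign_of_le {i : Fin m} (hi : i.val ≤ 1) : rowSign i = 1 := if_pos hi

theorem rowSign_of_lt {i : Fin m} (hi : 1 < i.val) : rowSign i = -1 := if_neg hi.not_ge

theorem rowSign_mul_self (i : Fin m) : rowSign i * rowSign i = 1 := by
  unfold rowSign
  split_ifs <;> norm_num

theorem rowSign_mul_rowSign_swap (i : Fin (m + 3)) :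
    rowSign i * rowSign (Equiv.swap 1 2 i) = parity i := by
  simp only [rowSign, parity, Equiv.swap_apply_def, Fin.ext_iff, apply_ite Fin.val,
    Fin.val_one, Fin.val_two]
  split_ifs <;> first | omega | norm_num

theorem B4_transpose_mul_self : (B4 : Matrix (Fin (m + 3)) (Fin (m + 3)) ℝ)ᵀ * B4 = 1 := by
  refine mul_eq_one_comm.mp ?_
  ext i j
  simp only [mul_apply, transpose_apply, B4_apply, mul_ite, mul_zero, Finset.sum_ite_eq,
    Finset.mem_univ, if_true, ite_mul, zero_mul, one_apply, Equiv.apply_eq_iff_eq]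
  split_ifs with hij <;> simp_all [rowSign_mul_self]

theorem th4_mul (X Y : Matrix (Fin (m + 3)) (Fin (m + 3)) ℝ) : th4 (X * Y) = th4 X * th4 Y :=
  calc B4 * (X * Y) * B4ᵀ = B4 * X * 1 * Y * B4ᵀ := by
        simp only [Matrix.mul_one, Matrix.mul_assoc]
    _ = B4 * X * B4ᵀ * (B4 * Y * B4ᵀ) := by
        rw [← B4_transpose_mul_self]
        simp only [Matrix.mul_assoc]

theorem th4_br (X Y : Matrix (Fin (m + 3)) (Fin (m + 3)) ℝ) :
    th4 (br X Y) = br (th4 X) (th4 Y) := by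
  simp only [br, th4_sub, th4_mul]

theorem th4_apply (X : Matrix (Fin (m + 3)) (Fin (m + 3)) ℝ) (i j : Fin (m + 3)) :
    th4 X i j = rowSign i * rowSign j * X (Equiv.swap 1 2 i) (Equiv.swap 1 2 j) := by
  simp only [th4, mul_apply, transpose_apply, B4_apply, ite_mul, zero_mul, mul_ite, mul_zero,
    Finset.sum_ite_eq, Finset.mem_univ, if_true]
  ring

theorem th4_th4_apply (X : Matrix (Fin (m + 3)) (Fin (m + 3)) ℝ) (i j : Fin (m + 3)) :
    th4 (th4 X) i j = parity i * parity j * X i j := by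
  simp only [th4_apply, Equiv.swap_apply_self, ← rowSign_mul_rowSign_swap]
  ring

theorem swap_one_two_apply_of_ne {i : Fin (m + 3)} (h1 : i.val ≠ 1) (h2 : i.val ≠ 2) :
    Equiv.swap 1 2 i = i :=
  Equiv.swap_apply_of_ne_of_ne (fun h => h1 (congrArg Fin.val h)) (fun h => h2 (congrArg Fin.val h))

theorem parity_eq_iff {i j : Fin m} :
    parity i = parity j ↔ ((i.val = 1 ∨ i.val = 2) ↔ (j.val = 1 ∨ j.val = 2)) := by
  unfold parity
  split_ifs <;> grind

theorem parity_mul_self (i : Fin m) : parity i * parity i = 1 := by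
  unfold parity
  split_ifs <;> norm_num

theorem parity_mul_of_ne {i j : Fin m} (hij : parity i ≠ parity j) :
    parity i * parity j = -1 := by
  unfold parity at hij ⊢
  split_ifs at hij ⊢ <;> first | exact absurd rfl hij | norm_num

end SignedPermutation

section Grading

variable {m : ℕ} {X Y : Matrix (Fin (m + 3)) (Fin (m + 3)) ℝ}

theorem th4_th4_th4_th4 (X : Matrix (Fin (m + 3)) (Fin (m + 3)) ℝ) :
    th4 (th4 (th4 (th4 X))) = X := by
  ext i j
  rw [th4_th4_apply, th4_th4_apply]
  linear_combination (parity i * parity i * X i j) * parity_mul_self j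
    + X i j * parity_mul_self i

theorem isOdd_f0 (X : Matrix (Fin (m + 3)) (Fin (m + 3)) ℝ) : IsOdd (f0 X) := by
  unfold IsOdd f0
  simp only [th4_smul, th4_sub, th4_th4_th4_th4]
  module

theorem isOdd_iff_apply_eq_zero :
    IsOdd X ↔ ∀ i j, parity i = parity j → X i j = 0 := by
  simp only [IsOdd, ← Matrix.ext_iff, th4_th4_apply, Matrix.neg_apply]
  refine forall₂_congr fun i j => ?_
  by_cases hij : parity i = parity j
  · simp only [hij, parity_mul_self, one_mul, forall_const, self_eq_neg]
  · simp only [hij, parity_mul_of_ne hij, neg_one_mul, IsEmpty.forall_iff]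

theorem IsEven.apply_eq_zero (hX : IsEven X) {i j : Fin (m + 3)} (hij : parity i ≠ parity j) :
    X i j = 0 := by
  have h := th4_th4_apply X i j
  rw [hX, parity_mul_of_ne hij] at h
  linarith

theorem IsOdd.inM (hX : IsOdd X) (hskew : inSO X) : inM X := by
  have hzero := isOdd_iff_apply_eq_zero.mp hX
  exact ⟨hskew, fun i j hi hj => hzero i j (parity_eq_iff.mpr (by omega)),
    fun i j hi hj => hzero i j (parity_eq_iff.mpr (by omega))⟩

theorem isOdd_p1 (X : Matrix (Fin (m + 3)) (Fin (m + 3)) ℝ) : IsOdd (p1 X) := by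
  refine isOdd_iff_apply_eq_zero.mpr fun i j hij => ?_
  rw [parity_eq_iff] at hij
  exact if_neg (by omega)

theorem isOdd_p2 (X : Matrix (Fin (m + 3)) (Fin (m + 3)) ℝ) : IsOdd (p2 X) := by
  refine isOdd_iff_apply_eq_zero.mpr fun i j hij => ?_
  rw [parity_eq_iff] at hij
  exact if_neg (by omega)

theorem IsOdd.p3_eq_zero (hX : IsOdd X) : p3 X = 0 := by
  ext i j
  simp only [p3, of_apply, Matrix.zero_apply, ite_eq_right_iff]
  intro hij
  exact isOdd_iff_apply_eq_zero.mp hX i j (parity_eq_iff.mpr (by omega))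

theorem IsOdd.br (hX : IsOdd X) (hY : IsOdd Y) : IsEven (br X Y) := by
  unfold IsOdd IsEven at *
  rw [th4_br, th4_br, hX, hY]
  simp only [FlagMfld.br, neg_mul_neg]

theorem IsOdd.th4_br_th4 (hX : IsOdd X) :
    FlagMfld.th4 (FlagMfld.br X (FlagMfld.th4 X)) = FlagMfld.br X (FlagMfld.th4 X) := by
  unfold IsOdd at hX
  rw [th4_br, hX]
  simp only [FlagMfld.br, Matrix.mul_neg, Matrix.neg_mul]
  abel

theorem inSO.inH_of_th4_eq_self (hX : inSO X) (hfix : FlagMfld.th4 X = X) : inH X := by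
  refine ⟨hX, fun i j hne => ?_⟩
  have heven : IsEven X := by rw [IsEven, hfix, hfix]
  have hparity : parity i = parity j := by
    by_contra hij
    exact hne (heven.apply_eq_zero hij)
  have hij : i.val ≠ j.val := by
    intro hval
    obtain rfl := Fin.ext hval
    exact hne (self_eq_neg.mp (hX.apply_eq_neg i i))
  rw [parity_eq_iff] at hparity
  by_contra hnot
  have hfixed : X i j = -X i j := by
    have hsign : rowSign i * rowSign j = -1 := by
      unfold rowSign
      split_ifs <;> first | omega | norm_num
    nth_rw 1 [← hfix]
    rw [th4_apply, hsign, neg_one_mul, swap_one_two_apply_of_ne (by omega) (by omega),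
      swap_one_two_apply_of_ne (by omega) (by omega)]
  exact hne (self_eq_neg.mp hfixed)

end Grading

section NearlyKahler

variable {m : ℕ} {X Y Z : Matrix (Fin (m + 3)) (Fin (m + 3)) ℝ}

theorem Ust_of_isOdd (s t : ℝ) (hX : IsOdd X) (hY : IsOdd Y) :
    Ust s t X Y = ((s - 1) / (2 * t)) • (br (p1 X) (p2 Y) + br (p1 Y) (p2 X)) := by
  simp only [Ust, hX.p3_eq_zero, hY.p3_eq_zero, br, Matrix.mul_zero, Matrix.zero_mul, sub_zero,
    add_zero, smul_zero, zero_add]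

theorem isEven_Ust (s t : ℝ) (hX : IsOdd X) (hY : IsOdd Y) : IsEven (Ust s t X Y) := by
  rw [Ust_of_isOdd s t hX hY]
  exact (((isOdd_p1 X).br (isOdd_p2 Y)).add ((isOdd_p1 Y).br (isOdd_p2 X))).smul _

theorem pM_br_th4_eq_zero (hZ : IsOdd Z) (hskew : inSO Z) : pM (br Z (th4 Z)) = 0 :=
  pM_eq_zero_of_inH ((hskew.br hskew.th4).inH_of_th4_eq_self hZ.th4_br_th4)

theorem nkCond_f0_iff_Ust_th4_eq_zero (s t : ℝ) :
    nkCond (n := m + 3) s t f0 ↔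
      ∀ Z : Matrix (Fin (m + 3)) (Fin (m + 3)) ℝ, inSO Z → IsOdd Z → Ust s t Z (th4 Z) = 0 := by
  have hdefect : ∀ Z : Matrix (Fin (m + 3)) (Fin (m + 3)) ℝ, inSO Z → IsOdd Z →
      (1 / 2 : ℝ) • pM (br Z (f0 Z)) + Ust s t Z (f0 Z) - f0 (Ust s t Z Z) =
        Ust s t Z (th4 Z) := by
    intro Z hskew hZ
    rw [hZ.f0_eq_th4, pM_br_th4_eq_zero hZ hskew, (isEven_Ust s t hZ hZ).f0_eq_zero, smul_zero,
      zero_add, sub_zero]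
  constructor
  · intro hnk Z hskew hZ
    have hf0 : f0 (-th4 Z) = Z := by
      rw [hZ.th4.neg.f0_eq_th4, th4_neg, hZ, neg_neg]
    have hskew' : inSO (-th4 Z) := congrArg Neg.neg hskew.th4
    have hcond := hnk (-th4 Z) (hZ.th4.neg.inM hskew')
    rwa [hf0, hdefect Z hskew hZ] at hcond
  · intro hU X hX
    have hskew : inSO (f0 X) := inSO.f0 hX.1
    rw [hdefect (f0 X) hskew (isOdd_f0 X)]
    exact hU (f0 X) hskew (isOdd_f0 X)

theorem br_p1_p2_zero_apply (X Y : Matrix (Fin (m + 3)) (Fin (m + 3)) ℝ) {k : Fin (m + 3)}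
    (hk : 3 ≤ k.val) : br (p1 X) (p2 Y) 0 k = X 0 1 * Y 1 k + X 0 2 * Y 2 k := by
  have hY : ∀ l, p2 Y 0 l = 0 := fun l => by simp [p2]
  have hX : ∀ l : Fin m, p1 X 0 l.succ.succ.succ = 0 := fun l => by simp [p1]
  simp only [br, Matrix.sub_apply, mul_apply, Fin.sum_univ_succ, hX, hY, zero_mul,
    Finset.sum_const_zero]
  simp [p1, p2, hk]

theorem Ust_th4_zero_apply (s t : ℝ) (hZ : IsOdd Z) {k : Fin (m + 3)} (hk : 3 ≤ k.val) :
    Ust s t Z (th4 Z) 0 k = (s - 1) / t * (Z 0 2 * Z 1 k - Z 0 1 * Z 2 k) := by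
  have hswap₀ : Equiv.swap 1 2 (0 : Fin (m + 3)) = 0 := swap_one_two_apply_of_ne (by simp) (by simp)
  have hswap : Equiv.swap 1 2 k = k := swap_one_two_apply_of_ne (by omega) (by omega)
  have hsign₀ : rowSign (0 : Fin (m + 3)) = 1 := rowSign_of_le (by simp)
  have hsign₁ : rowSign (1 : Fin (m + 3)) = 1 := rowSign_of_le (by simp)
  have hsign₂ : rowSign (2 : Fin (m + 3)) = -1 := rowSign_of_lt (by rw [Fin.val_two]; norm_num)
  have hsign : rowSign k = -1 := rowSign_of_lt (by omega)
  have h01 : th4 Z 0 1 = Z 0 2 := by simp [th4_apply, hswap₀, hsign₀, hsign₁]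
  have h02 : th4 Z 0 2 = -Z 0 1 := by simp [th4_apply, hswap₀, hsign₀, hsign₂]
  have h1k : th4 Z 1 k = -Z 2 k := by simp [th4_apply, hswap, hsign, hsign₁]
  have h2k : th4 Z 2 k = Z 1 k := by simp [th4_apply, hswap, hsign, hsign₂]
  rw [Ust_of_isOdd s t hZ hZ.th4, Matrix.smul_apply, Matrix.add_apply, br_p1_p2_zero_apply _ _ hk,
    br_p1_p2_zero_apply _ _ hk, h01, h02, h1k, h2k, smul_eq_mul]
  ring

/-- The elementary skew-symmetric matrix `E_{ij} - E_{ji}`, used to build matrices in the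
odd part. -/
def skewSingle (i j : Fin m) : Matrix (Fin m) (Fin m) ℝ := single i j 1 - single j i 1

theorem inSO_skewSingle (i j : Fin m) : inSO (skewSingle i j) := by
  simp only [inSO, skewSingle, transpose_sub, transpose_single, neg_sub]

theorem skewSingle_apply (i j k l : Fin m) :
    skewSingle i j k l = (if i = k ∧ j = l then 1 else 0) - if j = k ∧ i = l then 1 else 0 := by
  rw [skewSingle, Matrix.sub_apply, single_apply, single_apply]

theorem isOdd_skewSingle {i j : Fin (m + 3)} (hij : parity i ≠ parity j) :
    IsOdd (skewSingle i j) := by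
  refine isOdd_iff_apply_eq_zero.mpr fun k l hkl => ?_
  have hkl₁ : ¬(i = k ∧ j = l) := by
    rintro ⟨rfl, rfl⟩
    exact hij hkl
  have hkl₂ : ¬(j = k ∧ i = l) := by
    rintro ⟨rfl, rfl⟩
    exact hij hkl.symm
  rw [skewSingle_apply, if_neg hkl₁, if_neg hkl₂, sub_zero]

theorem exists_isOdd_Ust_th4_ne_zero {s t : ℝ} (hs : s ≠ 1) (ht : t ≠ 0) {k : Fin (m + 3)}
    (hk : 3 ≤ k.val) : ∃ Z : Matrix (Fin (m + 3)) (Fin (m + 3)) ℝ,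
      inSO Z ∧ IsOdd Z ∧ Ust s t Z (th4 Z) ≠ 0 := by
  let Z : Matrix (Fin (m + 3)) (Fin (m + 3)) ℝ := skewSingle 0 2 + skewSingle 1 k
  have hZ : IsOdd Z :=
    (isOdd_skewSingle (mt parity_eq_iff.mp (by simp))).add
      (isOdd_skewSingle (mt parity_eq_iff.mp (by rw [Fin.val_one]; omega)))
  refine ⟨Z, (inSO_skewSingle 0 2).add (inSO_skewSingle 1 k), hZ, fun hU => ?_⟩
  have h20 : (2 : Fin (m + 3)) ≠ 0 := Fin.ne_of_val_ne (by rw [Fin.val_two]; simp)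
  have h21 : (2 : Fin (m + 3)) ≠ 1 := Fin.ne_of_val_ne (by rw [Fin.val_two]; simp)
  have hk0 : k ≠ 0 := Fin.ne_of_val_ne (by rw [Fin.val_zero]; omega)
  have hk1 : k ≠ 1 := Fin.ne_of_val_ne (by rw [Fin.val_one]; omega)
  have h02 : Z 0 2 = 1 := by simp [Z, skewSingle_apply, hk0, h20]
  have h1k : Z 1 k = 1 := by simp [Z, skewSingle_apply, hk0.symm, hk1]
  have h01 : Z 0 1 = 0 := by simp [Z, skewSingle_apply, hk0, h21]
  have hentry : (s - 1) / t = 0 := by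
    simpa only [Ust_th4_zero_apply s t hZ hk, h02, h1k, h01, mul_one, zero_mul, sub_zero,
      Matrix.zero_apply] using congrFun (congrFun hU 0) k
  exact div_ne_zero (sub_ne_zero.mpr hs) ht hentry

end NearlyKahler

end FlagMfld

/-- On the 4-symmetric space `SO(n)/SO(2)×SO(n-3)`, the canonical
f-structure `f₀` is a nearly Kähler f-structure for the invariant metric with
characteristic numbers `(s,t)` iff `s = 1` (with `t > 0` arbitrary). -/
theorem statement14 (n : ℕ) (hn : 4 ≤ n) (s t : ℝ) (hs : 0 < s) (ht : 0 < t) :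
    nkCond (n := n) s t f0 ↔ s = 1 := by
  obtain ⟨m, rfl⟩ := Nat.exists_eq_add_of_le' (show 3 ≤ n by omega)
  rw [nkCond_f0_iff_Ust_th4_eq_zero]
  constructor
  · intro hU
    by_contra hs1
    obtain ⟨Z, hskew, hZ, hne⟩ :=
      exists_isOdd_Ust_th4_ne_zero (k := Fin.last (m + 2)) hs1 ht.ne' (by simpa using hn)
    exact hne (hU Z hskew hZ)
  · rintro rfl Z - hZ
    rw [Ust_of_isOdd 1 t hZ hZ.th4, sub_self, zero_div, zero_smul]
end

section
/- Consider SO(n)/SO(2)×SO(n−3) as a 4-symmetric space with its unique canonical f-structure f₀. For every s, t > 0, f₀ satisfies the G₁f condition for (s,t): f₀(2·U_{s,t}(f₀X, f₀²X) − f₀(U_{s,t}(f₀X, f₀X)) + f₀(U_{s,t}(f₀²X, f₀²X))) = 0 for all X ∈ 𝔪. In other words, f₀ is a G₁f-structure with respect to every invariant Riemannian metric. -/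
open Matrix

open FlagMfld

/-!
The square of the order-four automorphism `θ` is an involution `σ`. Since `θ⁴ = 1`, the image of
`f = ½(θ - θ³)` lies in the `(-1)`-eigenspace of `σ`, while `f` kills the `(+1)`-eigenspace. If `U`
is `σ`-equivariant and even, then `U (f X) (f Y)` is fixed by `σ`, so `f (U (f X) (f Y)) = 0`, and
every term of the `G₁f` condition vanishes.

For `SO(n)/SO(2)×SO(n-3)`, `σ` is conjugation by the diagonal sign matrix `B₄²`. It rescales each
matrix entry, so it commutes with the entrywise projections `p1`, `p2`, `p3`; it also preserves the
bracket, so it preserves every `U_{s,t}`.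
-/

section FourSymmetric

variable {R M : Type*} [CommRing R] [Invertible (2 : R)] [AddCommGroup M] [Module R M]

/-- The canonical `f`-structure `½(θ - θ³)` of a 4-symmetric space, where `M` is the tangent space
at the base point and `θ` is the differential of the order-four automorphism. -/
def canonicalFStructure (θ : Module.End R M) : Module.End R M :=
  (⅟2 : R) • (θ - θ ^ 3)

variable {θ : Module.End R M}

theorem canonicalFStructure_apply_eq_zero {Z : M} (hZ : (θ ^ 2) Z = Z) :
    canonicalFStructure θ Z = 0 := by
  have hcube : (θ ^ 3) Z = θ Z := by rw [pow_succ', Module.End.mul_apply, hZ]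
  simp [canonicalFStructure, hcube]

theorem sq_canonicalFStructure_apply (hθ : θ ^ 4 = 1) (X : M) :
    (θ ^ 2) (canonicalFStructure θ X) = -canonicalFStructure θ X := by
  have hmul : θ ^ 2 * canonicalFStructure θ = -canonicalFStructure θ := by
    have hfive : θ ^ 2 * θ ^ 3 = θ := by rw [← pow_add, pow_succ, hθ, one_mul]
    rw [canonicalFStructure, mul_smul_comm, mul_sub, hfive, ← pow_succ, ← smul_neg, neg_sub]
  exact congrArg (· X) hmul

variable {U : M → M → M}

theorem sq_map_canonicalFStructure (hθ : θ ^ 4 = 1)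
    (hU : ∀ X Y, (θ ^ 2) (U X Y) = U ((θ ^ 2) X) ((θ ^ 2) Y))
    (hU_neg : ∀ X Y, U (-X) (-Y) = U X Y) (X Y : M) :
    (θ ^ 2) (U (canonicalFStructure θ X) (canonicalFStructure θ Y)) =
      U (canonicalFStructure θ X) (canonicalFStructure θ Y) := by
  rw [hU, sq_canonicalFStructure_apply hθ, sq_canonicalFStructure_apply hθ, hU_neg]

theorem statement15_general (hθ : θ ^ 4 = 1)
    (hU : ∀ X Y, (θ ^ 2) (U X Y) = U ((θ ^ 2) X) ((θ ^ 2) Y))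
    (hU_neg : ∀ X Y, U (-X) (-Y) = U X Y) (X : M) :
    let f := canonicalFStructure θ
    f ((2 : R) • U (f X) (f (f X)) - f (U (f X) (f X)) + f (U (f (f X)) (f (f X)))) = 0 := by
  intro f
  have hf (X Y : M) : f (U (f X) (f Y)) = 0 :=
    canonicalFStructure_apply_eq_zero (sq_map_canonicalFStructure hθ hU hU_neg X Y)
  simp only [hf, sub_zero, add_zero, map_smul, smul_zero]

end FourSymmetric

namespace FlagMfld

variable {n : ℕ}

section Equivariance

theorem p1_diagonal_mul_mul_diagonal (d e : Fin n → ℝ) (X : Matrix (Fin n) (Fin n) ℝ) :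
    p1 (diagonal d * X * diagonal e) = diagonal d * p1 X * diagonal e := by
  ext i j
  simp [p1]

theorem p2_diagonal_mul_mul_diagonal (d e : Fin n → ℝ) (X : Matrix (Fin n) (Fin n) ℝ) :
    p2 (diagonal d * X * diagonal e) = diagonal d * p2 X * diagonal e := by
  ext i j
  simp [p2]

theorem p3_diagonal_mul_mul_diagonal (d e : Fin n → ℝ) (X : Matrix (Fin n) (Fin n) ℝ) :
    p3 (diagonal d * X * diagonal e) = diagonal d * p3 X * diagonal e := by
  ext i j
  simp [p3]

theorem br_conj_of_mul_self_eq_one {D : Matrix (Fin n) (Fin n) ℝ} (hD : D * D = 1)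
    (X Y : Matrix (Fin n) (Fin n) ℝ) :
    br (D * X * D) (D * Y * D) = D * br X Y * D := by
  have hmul (X Y : Matrix (Fin n) (Fin n) ℝ) : D * X * D * (D * Y * D) = D * (X * Y) * D := by
    calc D * X * D * (D * Y * D) = D * X * (D * D) * Y * D := by simp only [mul_assoc]
      _ = D * (X * Y) * D := by rw [hD, mul_one, mul_assoc D X Y]
  rw [br, hmul, hmul, br, mul_sub, sub_mul]

theorem Ust_diagonal_conj {d : Fin n → ℝ} (hd : diagonal d * diagonal d = 1) (s t : ℝ)
    (X Y : Matrix (Fin n) (Fin n) ℝ) :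
    Ust s t (diagonal d * X * diagonal d) (diagonal d * Y * diagonal d) =
      diagonal d * Ust s t X Y * diagonal d := by
  simp only [Ust, p1_diagonal_mul_mul_diagonal, p2_diagonal_mul_mul_diagonal,
    p3_diagonal_mul_mul_diagonal, br_conj_of_mul_self_eq_one hd, mul_add, add_mul,
    mul_smul_comm, smul_mul_assoc]

theorem p1_neg (X : Matrix (Fin n) (Fin n) ℝ) : p1 (-X) = -p1 X := by
  ext i j
  simp only [p1, Matrix.of_apply, Matrix.neg_apply]
  split_ifs <;> simp

theorem p2_neg (X : Matrix (Fin n) (Fin n) ℝ) : p2 (-X) = -p2 X := by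
  ext i j
  simp only [p2, Matrix.of_apply, Matrix.neg_apply]
  split_ifs <;> simp

theorem p3_neg (X : Matrix (Fin n) (Fin n) ℝ) : p3 (-X) = -p3 X := by
  ext i j
  simp only [p3, Matrix.of_apply, Matrix.neg_apply]
  split_ifs <;> simp

theorem br_neg_neg (X Y : Matrix (Fin n) (Fin n) ℝ) : br (-X) (-Y) = br X Y := by
  simp only [br, neg_mul_neg]

theorem Ust_neg_neg (s t : ℝ) (X Y : Matrix (Fin n) (Fin n) ℝ) :
    Ust s t (-X) (-Y) = Ust s t X Y := by
  simp only [Ust, p1_neg, p2_neg, p3_neg, br_neg_neg]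

end Equivariance

section OrderFour

/-- The permutation underlying the signed permutation matrix `B4`: it exchanges the (0-based)
indices 1 and 2. -/
def B4Perm (hn : 3 ≤ n) : Equiv.Perm (Fin n) :=
  Equiv.swap ⟨1, by omega⟩ ⟨2, by omega⟩

/-- The row signs of the signed permutation matrix `B4`: row `i` has its only nonzero entry
`B4Sign i` in column `B4Perm hn i`. -/
def B4Sign (i : Fin n) : ℝ := if i.val ≤ 1 then 1 else -1

/-- The diagonal of `B4 * B4`; the involution `θ²` is conjugation by this sign matrix. -/
def B4SqDiag (i : Fin n) : ℝ := if i.val = 1 ∨ i.val = 2 then -1 else 1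

theorem B4Perm_apply_self (hn : 3 ≤ n) (i : Fin n) : B4Perm hn (B4Perm hn i) = i :=
  Equiv.swap_apply_self ..

theorem B4_apply_eq_ite_B4Perm (hn : 3 ≤ n) (i j : Fin n) :
    (B4 : Matrix (Fin n) (Fin n) ℝ) i j =
      if B4Perm hn i = j then B4Sign i else 0 := by
  simp only [B4, B4Sign, Matrix.of_apply, B4Perm, Equiv.swap_apply_def, Fin.ext_iff]
  split_ifs <;> simp_all <;> omega

theorem B4Sign_mul_B4Sign_B4Perm (hn : 3 ≤ n) (i : Fin n) :
    B4Sign i * B4Sign (B4Perm hn i) = B4SqDiag i := by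
  simp only [B4Sign, B4SqDiag, B4Perm, Equiv.swap_apply_def, Fin.ext_iff]
  split_ifs <;> simp_all

theorem B4_mul_apply (hn : 3 ≤ n) (A : Matrix (Fin n) (Fin n) ℝ) (i j : Fin n) :
    ((B4 : Matrix (Fin n) (Fin n) ℝ) * A) i j = B4Sign i * A (B4Perm hn i) j := by
  simp [mul_apply, B4_apply_eq_ite_B4Perm hn]

theorem B4_mul_B4 (hn : 3 ≤ n) :
    (B4 : Matrix (Fin n) (Fin n) ℝ) * B4 = diagonal B4SqDiag := by
  ext i j
  rw [B4_mul_apply hn, B4_apply_eq_ite_B4Perm hn, B4Perm_apply_self, mul_ite, mul_zero,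
    B4Sign_mul_B4Sign_B4Perm hn, diagonal_apply]

theorem diagonal_B4SqDiag_mul_self :
    diagonal (B4SqDiag : Fin n → ℝ) * diagonal B4SqDiag = 1 := by
  rw [diagonal_mul_diagonal, ← diagonal_one]
  congr 1
  ext i
  unfold B4SqDiag
  split_ifs <;> norm_num

/-- The map `th4` as a linear endomorphism of the space of all matrices. -/
def th4End : Module.End ℝ (Matrix (Fin n) (Fin n) ℝ) :=
  LinearMap.mulLeftRight ℝ (B4, B4ᵀ)

theorem th4End_apply (X : Matrix (Fin n) (Fin n) ℝ) : th4End X = th4 X :=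
  LinearMap.mulLeftRight_apply ..

theorem f0_eq_canonicalFStructure :
    (f0 : Matrix (Fin n) (Fin n) ℝ → _) = canonicalFStructure th4End := by
  ext1 X
  simp [f0, canonicalFStructure, pow_succ, th4End_apply]

theorem th4End_sq_apply (hn : 3 ≤ n) (X : Matrix (Fin n) (Fin n) ℝ) :
    (th4End ^ 2) X = diagonal B4SqDiag * X * diagonal B4SqDiag := by
  calc (th4End ^ 2) X = B4 * B4 * X * (B4 * B4)ᵀ := by
        simp only [pow_two, Module.End.mul_apply, th4End_apply, th4, transpose_mul, mul_assoc]
    _ = diagonal B4SqDiag * X * diagonal B4SqDiag := by rw [B4_mul_B4 hn, diagonal_transpose]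

theorem th4End_pow_four (hn : 3 ≤ n) :
    (th4End : Module.End ℝ (Matrix (Fin n) (Fin n) ℝ)) ^ 4 = 1 := by
  ext1 X
  set D : Matrix (Fin n) (Fin n) ℝ := diagonal B4SqDiag
  calc (th4End ^ 4) X = (th4End ^ 2) ((th4End ^ 2) X) := by
        rw [← Module.End.mul_apply, ← pow_add]
    _ = D * D * X * (D * D) := by simp only [th4End_sq_apply hn, D, mul_assoc]
    _ = X := by rw [diagonal_B4SqDiag_mul_self, one_mul, mul_one]

theorem th4End_sq_Ust (hn : 3 ≤ n) (s t : ℝ) (X Y : Matrix (Fin n) (Fin n) ℝ) :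
    (th4End ^ 2) (Ust s t X Y) = Ust s t ((th4End ^ 2) X) ((th4End ^ 2) Y) := by
  simp only [th4End_sq_apply hn, Ust_diagonal_conj diagonal_B4SqDiag_mul_self]

end OrderFour

end FlagMfld

/-- On the 4-symmetric space `SO(n)/SO(2)×SO(n-3)`, the canonical
f-structure `f₀` is a `G₁f`-structure with respect to every invariant Riemannian metric. -/
theorem statement15 (n : ℕ) (hn : 4 ≤ n) (s t : ℝ) (hs : 0 < s) (ht : 0 < t) :
    g1Cond (n := n) s t f0 := by
  have h3 : 3 ≤ n := by omega
  rw [f0_eq_canonicalFStructure]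
  exact fun X _ => statement15_general (th4End_pow_four h3) (th4End_sq_Ust h3 s t)
    (Ust_neg_neg s t) X
end

section
/- Consider SO(n)/SO(2)×SO(n−3) as a 6-symmetric space with canonical f-structures f₁, f₂, f₃, f₄. For s, t > 0: f₁ satisfies the Killing condition for (s,t) — that is, (1/2)[X, f₁X]_𝔪 + U_{s,t}(X, f₁X) − f₁(U_{s,t}(X,X)) = 0 for all X ∈ 𝔪 — if and only if s = 1 and t = 4/3; and none of f₂, f₃, f₄ satisfies the Killing condition for any s, t > 0. -/
open Matrix

open FlagMfld

/-!
Pairing rows 2 and 3 identifies `𝔪₁`, `𝔪₂`, `𝔪₃` with `ℂ`, `ℂⁿ⁻³`, `ℝⁿ⁻³`, and there `θ` acts by the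
scalars `ω`, `-ω`, `-1`, where `ω = e^{-iπ/3}`. Hence each canonical structure acts by scalars
that vanish on `𝔪₃`; on `𝔪₁` and `𝔪₂` they are `(-i, i)`, `(0, i)`, `(-i, 0)`, `(-i, -i)` for
`f₁`, …, `f₄`. Up to `𝔥`, the brackets between different `𝔪ₖ` are the products `u ζ`, `u z` and
`Re (z̄ ζ)`, so for an operator acting by scalars the Killing expression multiplies each of these
three products by a constant. The Killing condition is the vanishing of the three constants.
-/

namespace FlagMfld

open Complex ComplexConjugate

variable {m : ℕ}

/-- The element of `𝔪` with coordinates `(z, u, ζ)`: the components in `𝔪₁ ≅ ℂ`, `𝔪₃ ≅ ℝᵐ` and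
`𝔪₂ ≅ ℂᵐ`, where `m = n - 3`. The complex structure comes from pairing rows 2 and 3, so that the
`so(2)` factor of the isotropy acts on `𝔪₁` and `𝔪₂` by complex scalars. -/
def ofCoords (z : ℂ) (u : Fin m → ℝ) (ζ : Fin m → ℂ) : Matrix (Fin (m + 3)) (Fin (m + 3)) ℝ :=
  of <|
    vecCons (vecCons 0 <| vecCons z.re <| vecCons z.im u) <|
    vecCons (vecCons (-z.re) <| vecCons 0 <| vecCons 0 fun j ↦ (ζ j).re) <|
    vecCons (vecCons (-z.im) <| vecCons 0 <| vecCons 0 fun j ↦ (ζ j).im)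
    fun j ↦ vecCons (-u j) <| vecCons (-(ζ j).re) <| vecCons (-(ζ j).im) 0

section Coordinates

variable (z z' : ℂ) (u u' : Fin m → ℝ) (ζ ζ' : Fin m → ℂ)

theorem ofCoords_add_ofCoords :
    ofCoords z u ζ + ofCoords z' u' ζ' = ofCoords (z + z') (u + u') (ζ + ζ') := by
  rw [← Matrix.ext_iff]
  simp [Fin.forall_fin_succ, ofCoords, add_comm]

theorem ofCoords_sub_ofCoords :
    ofCoords z u ζ - ofCoords z' u' ζ' = ofCoords (z - z') (u - u') (ζ - ζ') := by
  rw [← Matrix.ext_iff]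
  simp [Fin.forall_fin_succ, ofCoords, neg_add_eq_sub]

theorem smul_ofCoords (c : ℝ) : c • ofCoords z u ζ = ofCoords (c • z) (c • u) (c • ζ) := by
  rw [← Matrix.ext_iff]
  simp [Fin.forall_fin_succ, ofCoords]

theorem ofCoords_eq_zero_iff : ofCoords z u ζ = 0 ↔ z = 0 ∧ u = 0 ∧ ζ = 0 := by
  rw [← Matrix.ext_iff]
  simp only [Fin.forall_fin_succ, ofCoords, of_apply, cons_val', cons_val_zero, cons_val_succ,
    Matrix.zero_apply, Pi.zero_apply, true_and, and_true, neg_eq_zero, implies_true,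
    Complex.ext_iff, zero_re, zero_im, funext_iff]
  grind

theorem inM_ofCoords : inM (ofCoords z u ζ) := by
  rw [inM, ← Matrix.ext_iff]
  simp [Fin.forall_fin_succ, ofCoords]

theorem exists_eq_ofCoords {X : Matrix (Fin (m + 3)) (Fin (m + 3)) ℝ} (hX : inM X) :
    ∃ z u ζ, X = ofCoords z u ζ := by
  obtain ⟨hskew, h12, hlow⟩ := hX
  have hswap (i j) : X j i = -X i j := by simpa using congrFun₂ hskew i j
  have hdiag (i) : X i i = 0 := by linarith [hswap i i]
  have hX12 : X 1 2 = 0 := h12 1 2 rfl rfl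
  have hX21 : X 2 1 = 0 := by rw [hswap 1 2, hX12, neg_zero]
  have hlow' (i j : Fin m) : X i.succ.succ.succ j.succ.succ.succ = 0 :=
    hlow _ _ (by simp) (by simp)
  refine ⟨⟨X 0 1, X 0 2⟩, fun j ↦ X 0 j.succ.succ.succ,
    fun j ↦ ⟨X 1 j.succ.succ.succ, X 2 j.succ.succ.succ⟩, ?_⟩
  rw [← Matrix.ext_iff]
  simp [Fin.forall_fin_succ, ofCoords, hdiag, hX12, hX21, hlow', hswap 0, hswap 1 (Fin.succ _),
    hswap 2 (Fin.succ _)]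

theorem p1_ofCoords : p1 (ofCoords z u ζ) = ofCoords z 0 0 := by
  rw [← Matrix.ext_iff]
  simp [Fin.forall_fin_succ, ofCoords, p1]

theorem p2_ofCoords : p2 (ofCoords z u ζ) = ofCoords 0 0 ζ := by
  rw [← Matrix.ext_iff]
  simp [Fin.forall_fin_succ, ofCoords, p2]

theorem p3_ofCoords : p3 (ofCoords z u ζ) = ofCoords 0 u 0 := by
  rw [← Matrix.ext_iff]
  simp [Fin.forall_fin_succ, ofCoords, p3]

theorem pM_br_ofCoords : pM (br (ofCoords z u ζ) (ofCoords z' u' ζ')) =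
    ofCoords (∑ j, (u' j • ζ j - u j • ζ' j)) (fun j ↦ (conj z * ζ' j - conj z' * ζ j).re)
      (fun j ↦ u j • z' - u' j • z) := by
  rw [← Matrix.ext_iff]
  simp only [Fin.forall_fin_succ, pM, of_apply, Fin.val_zero, Fin.val_succ, br, Matrix.sub_apply,
    mul_apply, Fin.sum_univ_succ]
  simp [ofCoords, mul_comm, neg_add_eq_sub]

theorem br_m2_m3 : br (ofCoords 0 0 ζ) (ofCoords 0 u 0) = ofCoords (∑ j, u j • ζ j) 0 0 := by
  rw [← Matrix.ext_iff]
  simp only [Fin.forall_fin_succ, br, Matrix.sub_apply, mul_apply, Fin.sum_univ_succ]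
  simp [ofCoords, mul_comm]

theorem br_m1_m3 : br (ofCoords z 0 0) (ofCoords 0 u 0) = ofCoords 0 0 fun j ↦ -(u j • z) := by
  rw [← Matrix.ext_iff]
  simp only [Fin.forall_fin_succ, br, Matrix.sub_apply, mul_apply, Fin.sum_univ_succ]
  simp [ofCoords, mul_comm]

theorem br_m1_m2 :
    br (ofCoords z 0 0) (ofCoords 0 0 ζ) = ofCoords 0 (fun j ↦ (conj z * ζ j).re) 0 := by
  rw [← Matrix.ext_iff]
  simp only [Fin.forall_fin_succ, br, Matrix.sub_apply, mul_apply, Fin.sum_univ_succ]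
  simp [ofCoords, mul_comm, add_comm]

theorem Ust_ofCoords (s t : ℝ) : Ust s t (ofCoords z u ζ) (ofCoords z' u' ζ') =
    ofCoords (((t - s) / 2) • ∑ j, (u' j • ζ j + u j • ζ' j))
      (fun j ↦ (s - 1) / (2 * t) * (conj z * ζ' j + conj z' * ζ j).re)
      (fun j ↦ -((t - 1) / (2 * s)) • (u' j • z + u j • z')) := by
  simp only [Ust, p1_ofCoords, p2_ofCoords, p3_ofCoords, br_m2_m3, br_m1_m3, br_m1_m2,
    ofCoords_add_ofCoords, smul_ofCoords, Finset.sum_add_distrib]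
  congr 1
  · simp
  · ext j
    simp only [mul_re, conj_re, conj_im, add_re, Pi.add_apply, Pi.smul_apply, Pi.zero_apply,
      smul_eq_mul]
    ring
  · ext j; simp

end Coordinates

/-- `f` multiplies the components in `𝔪₁ ≅ ℂ`, `𝔪₃ ≅ ℝᵐ` and `𝔪₂ ≅ ℂᵐ` by the scalars `α`, `γ` and
`β` respectively, as every polynomial in `θ` does. -/
def ActsByScalars (f : Matrix (Fin (m + 3)) (Fin (m + 3)) ℝ → Matrix (Fin (m + 3)) (Fin (m + 3)) ℝ)
    (α : ℂ) (γ : ℝ) (β : ℂ) : Prop :=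
  ∀ z u ζ, f (ofCoords z u ζ) = ofCoords (α * z) (γ • u) (β • ζ)

namespace ActsByScalars

variable {f g : Matrix (Fin (m + 3)) (Fin (m + 3)) ℝ → Matrix (Fin (m + 3)) (Fin (m + 3)) ℝ}
  {α α' β β' : ℂ} {γ γ' : ℝ}

theorem add (hf : ActsByScalars f α γ β) (hg : ActsByScalars g α' γ' β') :
    ActsByScalars (fun X ↦ f X + g X) (α + α') (γ + γ') (β + β') := fun z u ζ ↦ by
  simp only [hf z u ζ, hg z u ζ, ofCoords_add_ofCoords, add_mul, add_smul]

theorem sub (hf : ActsByScalars f α γ β) (hg : ActsByScalars g α' γ' β') :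
    ActsByScalars (fun X ↦ f X - g X) (α - α') (γ - γ') (β - β') := fun z u ζ ↦ by
  simp only [hf z u ζ, hg z u ζ, ofCoords_sub_ofCoords, sub_mul, sub_smul]

theorem smul (hf : ActsByScalars f α γ β) (c : ℝ) :
    ActsByScalars (fun X ↦ c • f X) (c • α) (c • γ) (c • β) := fun z u ζ ↦ by
  simp only [hf z u ζ, smul_ofCoords, smul_assoc, smul_mul_assoc]

theorem iterate (hf : ActsByScalars f α γ β) (k : ℕ) :
    ActsByScalars f^[k] (α ^ k) (γ ^ k) (β ^ k) := fun z u ζ ↦ by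
  induction k with
  | zero => simp
  | succ k ih =>
    simp only [Function.iterate_succ_apply', ih, hf _ _ _, pow_succ', mul_assoc, mul_smul]

end ActsByScalars

/-- The eigenvalue `e^{-iπ/3}` of `θ` on `𝔪₁ ≅ ℂ`. -/
noncomputable def sixthRoot : ℂ := 1 / 2 - √3 / 2 * I

theorem sixthRoot_sq : sixthRoot ^ 2 = sixthRoot - 1 := by
  have h : (√3 : ℂ) ^ 2 = 3 := by norm_cast; simp
  rw [sixthRoot]
  linear_combination (1 / 4) * (I ^ 2) * h + 3 / 4 * I_sq

theorem sixthRoot_pow_four : sixthRoot ^ 4 = -sixthRoot := by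
  linear_combination (sixthRoot ^ 2 + sixthRoot) * sixthRoot_sq

theorem sixthRoot_pow_five : sixthRoot ^ 5 = 1 - sixthRoot := by
  linear_combination sixthRoot * sixthRoot_pow_four - sixthRoot_sq

theorem two_mul_sixthRoot_sub_one_div_sqrt_three : (2 * sixthRoot - 1) / √3 = -I := by
  have h : (√3 : ℂ) ≠ 0 := by simp
  rw [sixthRoot]
  field_simp
  ring

theorem actsByScalars_th6 : ActsByScalars (m := m) th6 sixthRoot (-1) (-sixthRoot) := by
  intro z u ζ
  rw [← Matrix.ext_iff]
  simp only [Fin.forall_fin_succ, forall_and, th6, mul_apply, Fin.sum_univ_succ, transpose_apply,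
    B6, of_apply, Fin.val_zero, Fin.val_succ, Fin.ext_iff]
  and_intros <;> intros <;> simp [ofCoords, sixthRoot, Fin.val_inj] <;> ring

theorem actsByScalars_f1 : ActsByScalars (m := m) f1 (-I) 0 I := by
  have hθ := (actsByScalars_th6 (m := m)).iterate
  convert ((hθ 1).sub (hθ 5)).smul (1 / √3) using 1
  · rfl
  · push_cast [real_smul]
    linear_combination -two_mul_sixthRoot_sub_one_div_sqrt_three + 1 / √3 * sixthRoot_pow_five
  · norm_num
  · push_cast [real_smul]
    linear_combination two_mul_sixthRoot_sub_one_div_sqrt_three - 1 / √3 * sixthRoot_pow_five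

theorem actsByScalars_f2 : ActsByScalars (m := m) f2 0 0 I := by
  have hθ := (actsByScalars_th6 (m := m)).iterate
  convert ((((hθ 1).sub (hθ 2)).add (hθ 4)).sub (hθ 5)).smul (1 / (2 * √3)) using 1
  · rfl
  · push_cast [real_smul]
    linear_combination 1 / (2 * √3) * (sixthRoot_sq - sixthRoot_pow_four + sixthRoot_pow_five)
  · norm_num
  · push_cast [real_smul]
    linear_combination two_mul_sixthRoot_sub_one_div_sqrt_three +
      1 / (2 * √3) * (sixthRoot_sq - sixthRoot_pow_four - sixthRoot_pow_five)

theorem actsByScalars_f3 : ActsByScalars (m := m) f3 (-I) 0 0 := by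
  have hθ := (actsByScalars_th6 (m := m)).iterate
  convert ((((hθ 1).add (hθ 2)).sub (hθ 4)).sub (hθ 5)).smul (1 / (2 * √3)) using 1
  · rfl
  · push_cast [real_smul]
    linear_combination -two_mul_sixthRoot_sub_one_div_sqrt_three +
      1 / (2 * √3) * (-sixthRoot_sq + sixthRoot_pow_four + sixthRoot_pow_five)
  · norm_num
  · push_cast [real_smul]
    linear_combination 1 / (2 * √3) * (-sixthRoot_sq + sixthRoot_pow_four - sixthRoot_pow_five)

theorem actsByScalars_f4 : ActsByScalars (m := m) f4 (-I) 0 (-I) := by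
  have hθ := (actsByScalars_th6 (m := m)).iterate
  convert ((hθ 2).sub (hθ 4)).smul (1 / √3) using 1
  · rfl
  · push_cast [real_smul]
    linear_combination -two_mul_sixthRoot_sub_one_div_sqrt_three +
      1 / √3 * (-sixthRoot_sq + sixthRoot_pow_four)
  · norm_num
  · push_cast [real_smul]
    linear_combination -two_mul_sixthRoot_sub_one_div_sqrt_three +
      1 / √3 * (-sixthRoot_sq + sixthRoot_pow_four)

section Killing

variable {f : Matrix (Fin (m + 3)) (Fin (m + 3)) ℝ → Matrix (Fin (m + 3)) (Fin (m + 3)) ℝ}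
  {α β : ℂ} {γ : ℝ}

theorem killing_expression_ofCoords (hf : ActsByScalars f α γ β) (s t : ℝ) (z : ℂ)
    (u : Fin m → ℝ) (ζ : Fin m → ℂ) :
    (1 / 2 : ℝ) • pM (br (ofCoords z u ζ) (f (ofCoords z u ζ))) +
        Ust s t (ofCoords z u ζ) (f (ofCoords z u ζ)) -
        f (Ust s t (ofCoords z u ζ) (ofCoords z u ζ)) =
      ofCoords
        (((γ - β) / 2 + ((t - s) / 2 : ℝ) * (β + γ - 2 * α)) * ∑ j, u j • ζ j)
        (fun j ↦ (((β - conj α) / 2 + ((s - 1) / (2 * t) : ℝ) * (β + conj α - 2 * γ)) *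
          (conj z * ζ j)).re)
        (fun j ↦ ((α - γ) / 2 - ((t - 1) / (2 * s) : ℝ) * (α + γ - 2 * β)) * (u j • z)) := by
  simp only [hf _ _ _, pM_br_ofCoords, Ust_ofCoords, smul_ofCoords, ofCoords_add_ofCoords,
    ofCoords_sub_ofCoords]
  congr 1
  · simp only [Finset.mul_sum, Finset.smul_sum, ← Finset.sum_sub_distrib, ← Finset.sum_add_distrib]
    refine Finset.sum_congr rfl fun j _ ↦ ?_
    simp only [real_smul, Pi.smul_apply, smul_eq_mul]
    push_cast
    ring
  · ext j
    simp only [Pi.add_apply, Pi.sub_apply, Pi.smul_apply, smul_eq_mul, map_mul, add_re, sub_re,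
      mul_re, add_im, sub_im, mul_im, conj_re, conj_im, ofReal_re, ofReal_im, div_ofNat_re,
      div_ofNat_im, re_ofNat, im_ofNat]
    ring
  · ext1 j
    simp only [Pi.add_apply, Pi.sub_apply, Pi.smul_apply, real_smul, smul_eq_mul]
    push_cast
    ring

theorem forall_ofCoords_mul_eq_zero_iff [NeZero m] {A B C : ℂ} :
    (∀ (z : ℂ) (u : Fin m → ℝ) (ζ : Fin m → ℂ),
      ofCoords (A * ∑ j, u j • ζ j) (fun j ↦ (B * (conj z * ζ j)).re)
        (fun j ↦ C * (u j • z)) = 0) ↔ A = 0 ∧ B = 0 ∧ C = 0 := by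
  refine ⟨fun h ↦ ?_, fun ⟨hA, hB, hC⟩ z u ζ ↦ ?_⟩
  · simp only [ofCoords_eq_zero_iff, funext_iff] at h
    have hA := (h 0 (Pi.single 0 1) (Pi.single 0 1)).1
    -- Taking `z = B` turns `Re (B * conj z)` into `|B|²`.
    have hB := (h B 0 (Pi.single 0 1)).2.1 0
    have hC := (h 1 (Pi.single 0 1) 0).2.2 0
    refine ⟨?_, ?_, ?_⟩
    · simpa [Finset.sum_pi_single', Pi.single_apply] using hA
    · simpa [mul_conj] using hB
    · simpa using hC
  · simp [ofCoords_eq_zero_iff, hA, hB, hC, funext_iff]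

theorem killCond_iff [NeZero m] (hf : ActsByScalars f α γ β) (s t : ℝ) :
    killCond s t f ↔
      (γ - β) / 2 + ((t - s) / 2 : ℝ) * (β + γ - 2 * α) = 0 ∧
      (β - conj α) / 2 + ((s - 1) / (2 * t) : ℝ) * (β + conj α - 2 * γ) = 0 ∧
      (α - γ) / 2 - ((t - 1) / (2 * s) : ℝ) * (α + γ - 2 * β) = 0 := by
  rw [← forall_ofCoords_mul_eq_zero_iff (m := m)]
  simp only [← killing_expression_ofCoords hf]
  refine ⟨fun h z u ζ ↦ h _ (inM_ofCoords z u ζ), fun h X hX ↦ ?_⟩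
  obtain ⟨z, u, ζ, rfl⟩ := exists_eq_ofCoords hX
  exact h z u ζ

theorem killCond_iff_of_imaginary [NeZero m] {a b : ℝ} (hf : ActsByScalars f (a * I) 0 (b * I))
    {s t : ℝ} (hs : s ≠ 0) (ht : t ≠ 0) :
    killCond s t f ↔
      (t - s) * (b - 2 * a) = b ∧ (s - 1) * (b - a) = -(a + b) * t ∧
      (t - 1) * (a - 2 * b) = a * s := by
  rw [killCond_iff hf]
  have smul_I_eq_zero (x : ℝ) : (x : ℂ) * I = 0 ↔ x = 0 := by simp
  have hA : (((0 : ℝ) : ℂ) - b * I) / 2 + ((t - s) / 2 : ℝ) * (b * I + (0 : ℝ) - 2 * (a * I)) =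
      (-b / 2 + (t - s) / 2 * (b - 2 * a) : ℝ) * I := by
    push_cast
    ring
  have hB : (b * I - conj (a * I)) / 2 +
        ((s - 1) / (2 * t) : ℝ) * (b * I + conj (a * I) - 2 * (0 : ℝ)) =
      ((a + b) / 2 + (s - 1) / (2 * t) * (b - a) : ℝ) * I := by
    push_cast [map_mul, conj_ofReal, conj_I]
    ring
  have hC : (a * I - (0 : ℝ)) / 2 - ((t - 1) / (2 * s) : ℝ) * (a * I + (0 : ℝ) - 2 * (b * I)) =
      (a / 2 - (t - 1) / (2 * s) * (a - 2 * b) : ℝ) * I := by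
    push_cast
    ring
  rw [hA, hB, hC, smul_I_eq_zero, smul_I_eq_zero, smul_I_eq_zero]
  refine and_congr ?_ (and_congr ?_ ?_)
  · constructor <;> intro h <;> linarith
  · field_simp
    constructor <;> intro h <;> linarith
  · field_simp
    constructor <;> intro h <;> linarith

end Killing

end FlagMfld

theorem statement16_general (n : ℕ) (hn : 4 ≤ n) (s t : ℝ) (hs : s ≠ 0) (ht : t ≠ 0) :
    (killCond (n := n) s t f1 ↔ (s = 1 ∧ t = 4 / 3)) ∧
    ¬ killCond (n := n) s t f2 ∧
    ¬ killCond (n := n) s t f3 ∧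
    ¬ killCond (n := n) s t f4 := by
  obtain ⟨m, rfl⟩ := Nat.exists_eq_add_of_le' hn
  have h1 := killCond_iff_of_imaginary (m := m + 1) (f := f1) (a := -1) (b := 1)
    (by simpa using actsByScalars_f1) hs ht
  have h2 := killCond_iff_of_imaginary (m := m + 1) (f := f2) (a := 0) (b := 1)
    (by simpa using actsByScalars_f2) hs ht
  have h3 := killCond_iff_of_imaginary (m := m + 1) (f := f3) (a := -1) (b := 0)
    (by simpa using actsByScalars_f3) hs ht
  have h4 := killCond_iff_of_imaginary (m := m + 1) (f := f4) (a := -1) (b := -1)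
    (by simpa using actsByScalars_f4) hs ht
  refine ⟨h1.trans ⟨fun h ↦ ?_, fun ⟨hs1, ht43⟩ ↦ ?_⟩, h2.not.2 fun h ↦ ?_,
    h3.not.2 fun h ↦ ?_, h4.not.2 fun h ↦ ?_⟩
  · constructor <;> linarith
  · subst hs1 ht43
    norm_num
  · exact hs (by linarith)
  · linarith
  · exact ht (by linarith)

/-- On the 6-symmetric space `SO(n)/SO(2)×SO(n-3)`: `f₁` is a Killing
f-structure for `(s,t)` iff `s = 1 ∧ t = 4/3`, and none of `f₂, f₃, f₄` is a Killing
f-structure for any `s, t > 0`. -/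
theorem statement16 (n : ℕ) (hn : 4 ≤ n) (s t : ℝ) (hs : 0 < s) (ht : 0 < t) :
    (killCond (n := n) s t f1 ↔ (s = 1 ∧ t = 4 / 3)) ∧
    ¬ killCond (n := n) s t f2 ∧
    ¬ killCond (n := n) s t f3 ∧
    ¬ killCond (n := n) s t f4 :=
  statement16_general n hn s t hs.ne' ht.ne'
end
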